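/- Let λ < 0 and n ≥ 2 be an integer. Then there exist T > 0 and a solution (x, y, θ) of the generating system with m = n on [0, T] such that: x(0) = y(0) > 0 and θ(0) = −π/4 (the curve starts on the diagonal y = x and leaves it perpendicularly); x(T) = y(T) > 0 and θ(T) = −5π/4 (the curve returns to the diagonal and meets it perpendicularly); and 0 < y(t) < x(t) for all t ∈ (0, T) (the curve stays strictly below the diagonal in between). -/

import Mathlib

open Real

/-!
In polar coordinates `x = ρ cos (π / 4 - β)`, `y = ρ sin (π / 4 - β)` and with time reversed, an
arc leaving the diagonal `β = 0` perpendicularly has a radius `ρ` that increases as long as its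
direction `χ` stays in `[0, π]`. We shoot with the initial radius `r`. For small `r` the arc comes
back to the diagonal: monotone quantities in coordinates rotated by `π / 4` confine it to a small
disc, where `χ` cannot reach `π`, and another one bounds its duration. At the critical radius
`r² = 4 (n - 1) + 2` an arc can only come back with `χ = π`. Coming back is a closed condition on
`r`, and as long as `χ < π` at the return the crossing of the diagonal is transversal, so that
coming back is also an open condition. Hence the arc from some radius comes back with `χ = π`,
that is, perpendicularly.

The axis `y = 0`, where the system is singular, is kept away by an integral identity for
`cos(2β)ᵃ sin χ`, which bounds `β` on all arcs that come back.
-/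

namespace LambdaArc

open Set Filter Topology Function
open scoped NNReal

section Flow

variable {E : Type*} [NormedAddCommGroup E] [NormedSpace ℝ E] [CompleteSpace E]
  {F : E → E} {K C : ℝ≥0}

/-- Picard–Lindelöf on the cylinder of radius and half-length `N`: since the field is bounded, the
ball in which the solutions are sought can be chosen large enough for any length of time. -/
theorem exists_flow_closedBall (hF : LipschitzWith K F) (hC : ∀ x, ‖F x‖ ≤ C) (N : ℝ≥0) :
    ∃ α : E × ℝ → E, (∀ x, ‖x‖ ≤ N → α (x, 0) = x ∧
      ∀ t ∈ Ioo (-N : ℝ) N, HasDerivAt (fun s => α (x, s)) (F (α (x, t))) t) ∧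
      ContinuousOn α (Metric.closedBall 0 N ×ˢ Icc (-N : ℝ) N) := by
  have hPL : IsPicardLindelof (fun _ => F) (tmin := -N) (tmax := N)
      ⟨0, by simp⟩ (0 : E) (N + C * N) N C K := by
    refine .of_time_independent (fun x _ => hC x) hF.lipschitzOnWith ?_
    simp
  obtain ⟨α, hα, hcont⟩ := hPL.exists_forall_mem_closedBall_eq_hasDerivWithinAt_continuousOn
  refine ⟨α, fun x hx => ?_, hcont⟩
  obtain ⟨h0, hd⟩ := hα x (by simpa using hx)
  exact ⟨h0, fun t ht => (hd t (Ioo_subset_Icc_self ht)).hasDerivAt (Icc_mem_nhds ht.1 ht.2)⟩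

theorem exists_continuous_flow (hF : LipschitzWith K F) (hC : ∀ x, ‖F x‖ ≤ C) :
    ∃ Φ : E → ℝ → E, Continuous (uncurry Φ) ∧ (∀ x, Φ x 0 = x) ∧
      ∀ x t, HasDerivAt (Φ x) (F (Φ x t)) t := by
  choose α hα hcont using exists_flow_closedBall hF hC
  have coherent : ∀ {N M : ℝ≥0} {x : E} {t : ℝ}, ‖x‖ ≤ N → ‖x‖ ≤ M → |t| < N → |t| < M →
      α N (x, t) = α M (x, t) := fun {N M x t} hxN hxM htN htM => by
    have hlt : |t| < min N M := lt_min htN htM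
    have hpos : (0 : ℝ) < min N M := (abs_nonneg t).trans_lt hlt
    refine ODE_solution_unique_of_mem_Ioo (v := fun _ => F) (s := fun _ => univ) (t₀ := 0)
      (fun _ _ => hF.lipschitzOnWith) ⟨neg_lt_zero.2 hpos, hpos⟩
      (fun s hs => ⟨(hα N x hxN).2 s ?_, trivial⟩) (fun s hs => ⟨(hα M x hxM).2 s ?_, trivial⟩)
      ((hα N x hxN).1.trans (hα M x hxM).1.symm) (abs_lt.1 hlt)
    · exact abs_lt.1 ((abs_lt.2 hs).trans_le (min_le_left _ _))
    · exact abs_lt.1 ((abs_lt.2 hs).trans_le (min_le_right _ _))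
  let R : E → ℝ → ℝ≥0 := fun x t => ‖x‖₊ + ‖t‖₊ + 1
  have norm_lt_R : ∀ x t, ‖x‖ < R x t := fun x t => by
    simp only [R, NNReal.coe_add, coe_nnnorm, NNReal.coe_one]
    linarith [norm_nonneg t]
  have abs_lt_R : ∀ x t, |t| < R x t := fun x t => by
    simp only [R, NNReal.coe_add, coe_nnnorm, NNReal.coe_one, norm_eq_abs]
    linarith [norm_nonneg x]
  have locally_eq : ∀ x t, ∀ᶠ p : E × ℝ in 𝓝 (x, t), α (R p.1 p.2) p = α (R x t) p := fun x t => by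
    filter_upwards [continuous_fst.norm.continuousAt.eventually (gt_mem_nhds (norm_lt_R x t)),
      continuous_snd.abs.continuousAt.eventually (gt_mem_nhds (abs_lt_R x t))] with p hx ht
    exact coherent (norm_lt_R _ _).le hx.le (abs_lt_R _ _) ht
  refine ⟨fun x t => α (R x t) (x, t), continuous_iff_continuousAt.2 fun ⟨x, t⟩ => ?_,
    fun x => (hα _ x (norm_lt_R x 0).le).1, fun x t => ?_⟩
  · refine ((hcont (R x t)).continuousAt (prod_mem_nhds ?_ ?_)).congr
      (EventuallyEq.symm (locally_eq x t))
    · exact mem_of_superset (Metric.isOpen_ball.mem_nhds (by simpa using norm_lt_R x t))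
        Metric.ball_subset_closedBall
    · exact Icc_mem_nhds (abs_lt.1 (abs_lt_R x t)).1 (abs_lt.1 (abs_lt_R x t)).2
  · exact ((hα _ x (norm_lt_R x t).le).2 t (abs_lt.1 (abs_lt_R x t))).congr_of_eventuallyEq
      ((Continuous.prodMk_right x).continuousAt.eventually (locally_eq x t))

end Flow

section Calculus

variable {f f' : ℝ → ℝ} {a b c d t : ℝ}

theorem monotoneOn_Icc_of_hasDerivAt_nonneg (hf : ∀ t ∈ Icc a b, HasDerivAt f (f' t) t)
    (hf' : ∀ t ∈ Icc a b, 0 ≤ f' t) : MonotoneOn f (Icc a b) :=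
  monotoneOn_of_hasDerivWithinAt_nonneg (convex_Icc a b) (HasDerivAt.continuousOn hf)
    (fun t ht => (hf t (interior_subset ht)).hasDerivWithinAt)
    fun t ht => hf' t (interior_subset ht)

theorem antitoneOn_Icc_of_hasDerivAt_nonpos (hf : ∀ t ∈ Icc a b, HasDerivAt f (f' t) t)
    (hf' : ∀ t ∈ Icc a b, f' t ≤ 0) : AntitoneOn f (Icc a b) :=
  antitoneOn_of_hasDerivWithinAt_nonpos (convex_Icc a b) (HasDerivAt.continuousOn hf)
    (fun t ht => (hf t (interior_subset ht)).hasDerivWithinAt)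
    fun t ht => hf' t (interior_subset ht)

theorem strictMonoOn_Icc_of_hasDerivAt_pos (hf : ∀ t ∈ Icc a b, HasDerivAt f (f' t) t)
    (hf' : ∀ t ∈ Ioo a b, 0 < f' t) : StrictMonoOn f (Icc a b) :=
  strictMonoOn_of_deriv_pos (convex_Icc a b) (HasDerivAt.continuousOn hf) fun t ht => by
    rw [interior_Icc] at ht
    rw [(hf t (Ioo_subset_Icc_self ht)).deriv]
    exact hf' t ht

theorem eventually_lt_nhdsLT_of_hasDerivAt_pos (hf : HasDerivAt f d t) (hd : 0 < d) :
    ∀ᶠ s in 𝓝[<] t, f s < f t := by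
  filter_upwards [(hasDerivAt_iff_tendsto_slope_left_right.1 hf).1.eventually (lt_mem_nhds hd),
    self_mem_nhdsWithin] with s hs hst
  rw [slope_def_field] at hs
  exact not_le.1 fun h =>
    (div_nonpos_of_nonneg_of_nonpos (sub_nonneg.2 h) (sub_neg.2 hst).le).not_gt hs

theorem eventually_lt_nhdsGT_of_hasDerivAt_neg (hf : HasDerivAt f d t) (hd : d < 0) :
    ∀ᶠ s in 𝓝[>] t, f s < f t := by
  filter_upwards [(hasDerivAt_iff_tendsto_slope_left_right.1 hf).2.eventually (gt_mem_nhds hd),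
    self_mem_nhdsWithin] with s hs hst
  rw [slope_def_field] at hs
  exact not_le.1 fun h => (div_nonneg (sub_nonneg.2 h) (sub_pos.2 hst).le).not_gt hs

theorem pos_of_deriv_pos_of_eq_zero (hf : ∀ t ∈ Icc a b, HasDerivAt f (f' t) t) (ha : 0 ≤ f a)
    (hf' : ∀ t ∈ Icc a b, f t = 0 → 0 < f' t) : ∀ t ∈ Ioc a b, 0 < f t := by
  have nonneg : ∀ t ∈ Icc a b, 0 ≤ f t := fun t ht => by
    have := image_le_of_deriv_right_lt_deriv_boundary' (f := -f) (f' := fun t => -f' t)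
      (B := fun _ => 0) (B' := fun _ => 0) (HasDerivAt.continuousOn hf).neg
      (fun s hs => (hf s (Ico_subset_Icc_self hs)).neg.hasDerivWithinAt) (by simpa using ha)
      continuousOn_const (fun s _ => hasDerivWithinAt_const _ _ _)
      (fun s hs h => by simpa using hf' s (Ico_subset_Icc_self hs) (by simpa using h)) ht
    simpa using this
  intro t ht
  refine (nonneg t (Ioc_subset_Icc_self ht)).lt_of_ne' fun h0 => ?_
  have htI := Ioc_subset_Icc_self ht
  obtain ⟨s, hs, hsI⟩ := ((eventually_lt_nhdsLT_of_hasDerivAt_pos (hf t htI) (hf' t htI h0)).and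
    (Ioo_mem_nhdsLT ht.1)).exists
  exact (nonneg s ⟨hsI.1.le, hsI.2.le.trans ht.2⟩).not_gt (h0 ▸ hs)

theorem le_of_deriv_nonpos_of_le (hf : ∀ t ∈ Icc a b, HasDerivAt f (f' t) t) (ha : f a ≤ c)
    (hf' : ∀ t ∈ Icc a b, c ≤ f t → f' t ≤ 0) : ∀ t ∈ Icc a b, f t ≤ c := by
  intro t ht
  have tilted : ∀ ε > 0, f t ≤ c + ε * (t - a) := fun ε hε =>
    image_le_of_deriv_right_lt_deriv_boundary' (B' := fun _ => ε) (HasDerivAt.continuousOn hf)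
      (fun s hs => (hf s (Ico_subset_Icc_self hs)).hasDerivWithinAt) (by simpa using ha)
      (by fun_prop)
      (fun s _ => by
        simpa using ((((hasDerivAt_id s).sub_const a).const_mul ε).const_add c).hasDerivWithinAt)
      (fun s hs h => (hf' s (Ico_subset_Icc_self hs)
        (h ▸ le_add_of_nonneg_right (mul_nonneg hε.le (sub_nonneg.2 hs.1)))).trans_lt hε) ht
  have lim : Tendsto (fun ε => c + ε * (t - a)) (𝓝[>] 0) (𝓝 c) :=
    ((Continuous.tendsto' (by fun_prop) 0 c (by simp)).mono_left nhdsWithin_le_nhds)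
  exact ge_of_tendsto lim (eventually_mem_nhdsWithin.mono tilted)

end Calculus

section AngleBarrier

/-- The integral `∫₀ᵇ cos(2s)ᵃ ds` of the weight that turns the equation for `χ` into an exact
derivative. -/
noncomputable def cosPowIntegral (a : ℕ) (b : ℝ) : ℝ := ∫ s in (0 : ℝ)..b, cos (2 * s) ^ a

/-- The function `cos(2b)ᵃ - c ∫₀ᵇ cos(2s)ᵃ ds`. With `c = μ r` it cannot be negative at an angle
reached by an arc that leaves the diagonal at radius `r` and comes back, which keeps such arcs
away from the axis `β = π / 4`. -/
noncomputable def angleBarrier (a : ℕ) (c b : ℝ) : ℝ := cos (2 * b) ^ a - c * cosPowIntegral a b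

variable {a : ℕ} {b c : ℝ}

@[simp] theorem cosPowIntegral_zero (a : ℕ) : cosPowIntegral a 0 = 0 := by simp [cosPowIntegral]

theorem hasDerivAt_cosPowIntegral (a : ℕ) (b : ℝ) :
    HasDerivAt (cosPowIntegral a) (cos (2 * b) ^ a) b := by
  have hc : Continuous fun s : ℝ => cos (2 * s) ^ a := by fun_prop
  exact intervalIntegral.integral_hasDerivAt_right (hc.intervalIntegrable _ _)
    (hc.stronglyMeasurableAtFilter _ _) hc.continuousAt

theorem cos_two_mul_pos (hb : b ∈ Ico 0 (π / 4)) : 0 < cos (2 * b) :=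
  cos_pos_of_mem_Ioo ⟨by linarith [hb.1, pi_pos], by linarith [hb.2]⟩

theorem cos_two_mul_nonneg (hb : b ∈ Icc 0 (π / 4)) : 0 ≤ cos (2 * b) :=
  cos_nonneg_of_mem_Icc ⟨by linarith [hb.1, pi_pos], by linarith [hb.2]⟩

theorem monotoneOn_cosPowIntegral (a : ℕ) : MonotoneOn (cosPowIntegral a) (Icc 0 (π / 4)) :=
  monotoneOn_Icc_of_hasDerivAt_nonneg (fun t _ => hasDerivAt_cosPowIntegral a t)
    fun _ ht => pow_nonneg (cos_two_mul_nonneg ht) a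

theorem cosPowIntegral_nonneg (hb : b ∈ Icc 0 (π / 4)) : 0 ≤ cosPowIntegral a b := by
  simpa using monotoneOn_cosPowIntegral a (left_mem_Icc.2 (hb.1.trans hb.2)) hb hb.1

theorem cosPowIntegral_pi_div_four_pos (a : ℕ) : 0 < cosPowIntegral a (π / 4) :=
  intervalIntegral.intervalIntegral_pos_of_pos_on
    (Continuous.intervalIntegrable (by fun_prop) _ _)
    (fun _ hs => pow_pos (cos_two_mul_pos (Ioo_subset_Ico_self hs)) a) (by positivity)

theorem antitoneOn_angleBarrier (a : ℕ) (hc : 0 ≤ c) :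
    AntitoneOn (angleBarrier a c) (Icc 0 (π / 4)) := fun x hx y hy hxy => by
  have hcos : cos (2 * y) ≤ cos (2 * x) :=
    cos_le_cos_of_nonneg_of_le_pi (by linarith [hx.1]) (by linarith [hy.2, pi_pos]) (by linarith)
  exact sub_le_sub (pow_le_pow_left₀ (cos_two_mul_nonneg hy) hcos a)
    (mul_le_mul_of_nonneg_left (monotoneOn_cosPowIntegral a hx hy hxy) hc)

theorem continuous_angleBarrier (a : ℕ) (c : ℝ) : Continuous (angleBarrier a c) := by
  have : Continuous (cosPowIntegral a) :=
    continuous_iff_continuousAt.2 fun b => (hasDerivAt_cosPowIntegral a b).continuousAt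
  unfold angleBarrier
  fun_prop

theorem exists_angleBarrier_neg (ha : a ≠ 0) (hc : 0 < c) :
    ∃ B ∈ Ioo 0 (π / 4), angleBarrier a c B < 0 := by
  have neg_at_axis : angleBarrier a c (π / 4) < 0 := by
    rw [angleBarrier, show 2 * (π / 4) = π / 2 by ring, cos_pi_div_two, zero_pow ha, zero_sub]
    exact neg_neg_of_pos (mul_pos hc (cosPowIntegral_pi_div_four_pos a))
  have near_axis := (continuous_angleBarrier a c).continuousAt.eventually (gt_mem_nhds neg_at_axis)
  obtain ⟨B, hneg, hB⟩ := ((near_axis.filter_mono nhdsWithin_le_nhds).and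
    (Ioo_mem_nhdsLT (by positivity : 0 < π / 4))).exists
  exact ⟨B, hB, hneg⟩

end AngleBarrier

/-- The derivative of the direction `χ` in the generating system written in reversed time and
polar coordinates `x = ρ cos (π / 4 - β)`, `y = ρ sin (π / 4 - β)`, `θ = χ - π / 4 - β - π`, with
`a = n - 1` and `μ = -λ`. The angle `χ` is measured from the direction of increasing `β`. -/
noncomputable def turning (a : ℕ) (μ ρ β χ : ℝ) : ℝ :=
  (2 * a * tan (2 * β) * sin χ - (ρ ^ 2 / 2 - (2 * a + 1)) * cos χ) / ρ + μ

/-- A solution `(ρ, β, χ)` on `[0, T]` of the generating system in polar coordinates (see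
`turning`) that leaves the diagonal `β = 0` perpendicularly and along which the angle `β` stays
between the diagonal and the axis and the radius `ρ` does not decrease. -/
structure PolarArc (a : ℕ) (μ : ℝ) (ρ β χ : ℝ → ℝ) (T : ℝ) : Prop where
  nonneg : 0 ≤ T
  β_zero : β 0 = 0
  χ_zero : χ 0 = 0
  ρ_pos : ∀ t ∈ Icc 0 T, 0 < ρ t
  β_mem : ∀ t ∈ Icc 0 T, β t ∈ Ico 0 (π / 4)
  χ_mem : ∀ t ∈ Icc 0 T, χ t ∈ Icc 0 π
  hasDerivAt_ρ : ∀ t ∈ Icc 0 T, HasDerivAt ρ (sin (χ t)) t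
  hasDerivAt_β : ∀ t ∈ Icc 0 T, HasDerivAt β (cos (χ t) / ρ t) t
  hasDerivAt_χ : ∀ t ∈ Icc 0 T, HasDerivAt χ (turning a μ (ρ t) (β t) (χ t)) t

namespace PolarArc

variable {a : ℕ} {μ : ℝ} {ρ β χ : ℝ → ℝ} {s t T : ℝ}

theorem restrict (h : PolarArc a μ ρ β χ T) (hs : s ∈ Icc 0 T) : PolarArc a μ ρ β χ s := by
  have sub : Icc 0 s ⊆ Icc 0 T := Icc_subset_Icc_right hs.2
  exact ⟨hs.1, h.β_zero, h.χ_zero, fun t ht => h.ρ_pos t (sub ht), fun t ht => h.β_mem t (sub ht),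
    fun t ht => h.χ_mem t (sub ht), fun t ht => h.hasDerivAt_ρ t (sub ht),
    fun t ht => h.hasDerivAt_β t (sub ht), fun t ht => h.hasDerivAt_χ t (sub ht)⟩

theorem left_mem (h : PolarArc a μ ρ β χ T) : 0 ∈ Icc 0 T := left_mem_Icc.2 h.nonneg

theorem right_mem (h : PolarArc a μ ρ β χ T) : T ∈ Icc 0 T := right_mem_Icc.2 h.nonneg

theorem β_mem_Icc (h : PolarArc a μ ρ β χ T) (ht : t ∈ Icc 0 T) : β t ∈ Icc 0 (π / 4) :=
  Ico_subset_Icc_self (h.β_mem t ht)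

theorem cos_two_mul_pos (h : PolarArc a μ ρ β χ T) (ht : t ∈ Icc 0 T) : 0 < cos (2 * β t) :=
  LambdaArc.cos_two_mul_pos (h.β_mem t ht)

theorem sin_nonneg (h : PolarArc a μ ρ β χ T) (ht : t ∈ Icc 0 T) : 0 ≤ sin (χ t) :=
  sin_nonneg_of_mem_Icc (h.χ_mem t ht)

theorem monotoneOn_ρ (h : PolarArc a μ ρ β χ T) : MonotoneOn ρ (Icc 0 T) :=
  monotoneOn_Icc_of_hasDerivAt_nonneg h.hasDerivAt_ρ fun _ ht => h.sin_nonneg ht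

theorem mul_time_le (h : PolarArc a μ ρ β χ T) :
    μ * T ≤ χ T + (ρ T ^ 2 / 2 - (2 * a + 1)) * β T := by
  let E := fun t => χ t + (ρ t ^ 2 / 2 - (2 * a + 1)) * β t - μ * t
  have hasDerivAt_E : ∀ t ∈ Icc 0 T, HasDerivAt E
      (2 * a / ρ t * tan (2 * β t) * sin (χ t) + β t * ρ t * sin (χ t)) t := fun t ht => by
    have hρ := (h.ρ_pos t ht).ne'
    refine (((h.hasDerivAt_χ t ht).add (((((h.hasDerivAt_ρ t ht).pow 2).div_const 2).sub_const
      (2 * (a : ℝ) + 1)).mul (h.hasDerivAt_β t ht))).sub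
      ((hasDerivAt_id t).const_mul μ)).congr_deriv ?_
    simp only [turning, Pi.pow_apply]
    field_simp
    ring
  have E_mono : E 0 ≤ E T :=
    monotoneOn_Icc_of_hasDerivAt_nonneg hasDerivAt_E (fun t ht => by
      have hsin := h.sin_nonneg ht
      have hρ := h.ρ_pos t ht
      obtain ⟨hβ, hβ'⟩ := h.β_mem t ht
      have htan : 0 ≤ tan (2 * β t) :=
        tan_nonneg_of_nonneg_of_le_pi_div_two (by linarith) (by linarith)
      positivity) h.left_mem h.right_mem h.nonneg
  simp only [E, h.β_zero, h.χ_zero, mul_zero, add_zero, sub_zero] at E_mono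
  linarith

theorem hasDerivAt_weighted_sin (h : PolarArc a μ ρ β χ T) (ht : t ∈ Icc 0 T) :
    HasDerivAt (fun t => cos (2 * β t) ^ a * sin (χ t) - μ * ρ t * cosPowIntegral a (β t))
      (-(ρ t ^ 2 / 2 - (2 * a + 1)) * (cos (2 * β t) ^ a * cos (χ t) ^ 2 / ρ t)
        - μ * sin (χ t) * cosPowIntegral a (β t)) t := by
  have hρ := (h.ρ_pos t ht).ne'
  have hcos := (h.cos_two_mul_pos ht).ne'
  have hβ := h.hasDerivAt_β t ht
  refine (((hβ.const_mul 2).cos.pow a |>.mul (h.hasDerivAt_χ t ht).sin).sub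
    (((h.hasDerivAt_ρ t ht).const_mul μ).mul
      ((hasDerivAt_cosPowIntegral a (β t)).comp t hβ))).congr_deriv ?_
  rw [turning, tan_eq_sin_div_cos]
  simp only [Pi.pow_apply, Function.comp_apply]
  rcases a with _ | k
  · simp only [pow_zero, CharP.cast_eq_zero]
    field_simp
    ring
  · simp only [Nat.add_sub_cancel, Nat.cast_add, Nat.cast_one, pow_succ]
    field_simp
    ring

/-- Below the critical radius `ρ² = 4 a + 2` the weighted sine, corrected by a multiple of `ρ`,
increases up to the time when the angle is maximal. -/
theorem angleBarrier_nonneg_of_forall_le (h : PolarArc a μ ρ β χ T) (hμ : 0 < μ)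
    (hmax : ∀ t ∈ Icc 0 T, β t ≤ β T) (hρT : ρ T ^ 2 / 2 ≤ 2 * a + 1) :
    0 ≤ angleBarrier a (μ * ρ 0) (β T) := by
  have mono := monotoneOn_Icc_of_hasDerivAt_nonneg
    (fun t ht => (h.hasDerivAt_weighted_sin ht).add
      ((h.hasDerivAt_ρ t ht).const_mul (μ * cosPowIntegral a (β T)))) (fun t ht => by
      have hsin := h.sin_nonneg ht
      have hρ := h.ρ_pos t ht
      have hρt : ρ t ^ 2 / 2 ≤ 2 * a + 1 := by
        have := pow_le_pow_left₀ hρ.le (h.monotoneOn_ρ ht h.right_mem ht.2) 2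
        linarith
      have hcos := (h.cos_two_mul_pos ht).le
      have hint : cosPowIntegral a (β t) ≤ cosPowIntegral a (β T) :=
        monotoneOn_cosPowIntegral a (h.β_mem_Icc ht) (h.β_mem_Icc h.right_mem) (hmax t ht)
      have radial : 0 ≤ -(ρ t ^ 2 / 2 - (2 * a + 1)) * (cos (2 * β t) ^ a * cos (χ t) ^ 2 / ρ t) :=
        mul_nonneg (by linarith) (by positivity)
      have angular := mul_le_mul_of_nonneg_left hint (mul_nonneg hμ.le hsin)
      linarith) h.left_mem h.right_mem h.nonneg
  simp only [h.β_zero, h.χ_zero, cosPowIntegral_zero, mul_zero, sin_zero, sub_zero,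
    Pi.add_apply, zero_add] at mono
  have hsin := mul_le_mul_of_nonneg_left (sin_le_one (χ T))
    (pow_nonneg (h.cos_two_mul_pos h.right_mem).le a)
  rw [angleBarrier]
  linarith

theorem sin_add_le_of_return (h : PolarArc a μ ρ β χ T) (hμ : 0 < μ) (hs : s ∈ Icc 0 T)
    (hβT : β T = 0) (hρs : 2 * a + 1 ≤ ρ s ^ 2 / 2) :
    sin (χ T) + μ * ρ s * cosPowIntegral a (β s) ≤ cos (2 * β s) ^ a * sin (χ s) := by
  have sub : Icc s T ⊆ Icc 0 T := Icc_subset_Icc_left hs.1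
  have anti := antitoneOn_Icc_of_hasDerivAt_nonpos
    (fun t ht => h.hasDerivAt_weighted_sin (sub ht)) (fun t htI => by
      have ht := sub htI
      have hsin := h.sin_nonneg ht
      have hρ := h.ρ_pos t ht
      have hρt : 2 * a + 1 ≤ ρ t ^ 2 / 2 := by
        have := pow_le_pow_left₀ (h.ρ_pos s hs).le (h.monotoneOn_ρ hs ht htI.1) 2
        linarith
      have hcos := (h.cos_two_mul_pos ht).le
      have hint := cosPowIntegral_nonneg (a := a) (h.β_mem_Icc ht)
      have radial : 0 ≤ (ρ t ^ 2 / 2 - (2 * a + 1)) * (cos (2 * β t) ^ a * cos (χ t) ^ 2 / ρ t) :=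
        mul_nonneg (by linarith) (by positivity)
      have angular : 0 ≤ μ * sin (χ t) * cosPowIntegral a (β t) := by positivity
      linarith) (left_mem_Icc.2 hs.2) (right_mem_Icc.2 hs.2) hs.2
  simp only [hβT, cosPowIntegral_zero, mul_zero, cos_zero, one_pow, one_mul, sub_zero] at anti
  linarith

theorem angleBarrier_nonneg_of_return (h : PolarArc a μ ρ β χ T) (hμ : 0 < μ) (hβT : β T = 0)
    (ht : t ∈ Icc 0 T) : 0 ≤ angleBarrier a (μ * ρ 0) (β t) := by
  obtain ⟨s, hs, hmax⟩ := isCompact_Icc.exists_isMaxOn ⟨0, h.left_mem⟩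
    (HasDerivAt.continuousOn h.hasDerivAt_β)
  have hρ0 := h.ρ_pos 0 h.left_mem
  refine le_trans ?_ (antitoneOn_angleBarrier a (mul_pos hμ hρ0).le (h.β_mem_Icc ht)
    (h.β_mem_Icc hs) (hmax ht))
  rcases le_total (ρ s ^ 2 / 2) (2 * (a : ℝ) + 1) with hρs | hρs
  · exact (h.restrict hs).angleBarrier_nonneg_of_forall_le hμ
      (fun t ht => hmax (Icc_subset_Icc_right hs.2 ht)) hρs
  · have hreturn := h.sin_add_le_of_return hμ hs hβT hρs
    have hsinT := h.sin_nonneg h.right_mem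
    have hsin := mul_le_mul_of_nonneg_left (sin_le_one (χ s))
      (pow_nonneg (h.cos_two_mul_pos hs).le a)
    have hradius := mul_le_mul_of_nonneg_right
      (mul_le_mul_of_nonneg_left (h.monotoneOn_ρ h.left_mem hs hs.1) hμ.le)
      (cosPowIntegral_nonneg (a := a) (h.β_mem_Icc hs))
    rw [angleBarrier]
    linarith

theorem sin_nonpos_of_return (h : PolarArc a μ ρ β χ T) (hμ : 0 < μ) (hβT : β T = 0)
    (hρ0 : 2 * a + 1 ≤ ρ 0 ^ 2 / 2) : sin (χ T) ≤ 0 := by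
  simpa [h.β_zero, h.χ_zero] using h.sin_add_le_of_return hμ h.left_mem hβT hρ0

/-- If `χ T ≤ π / 2`, then `β` would be increasing just before `T`; in the borderline case
`χ T = π / 2` this is because `χ` itself increases there. -/
theorem pi_div_two_lt_of_return (h : PolarArc a μ ρ β χ T) (hμ : 0 < μ) (hT : 0 < T)
    (hβT : β T = 0) : π / 2 < χ T := by
  by_contra! hχT
  have hχ := h.hasDerivAt_χ T h.right_mem
  have acute : ∀ᶠ s in 𝓝[<] T, χ s < π / 2 := by
    rcases hχT.lt_or_eq with hlt | heq
    · exact (hχ.continuousAt.eventually (gt_mem_nhds hlt)).filter_mono nhdsWithin_le_nhds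
    · rw [← heq]
      exact eventually_lt_nhdsLT_of_hasDerivAt_pos hχ (by simpa [turning, heq, hβT] using hμ)
  obtain ⟨s, hs, hacute⟩ := mem_nhdsLT_iff_exists_Ico_subset.1
    (acute.and (Ioo_mem_nhdsLT hT))
  have hs0 : s ∈ Ioo 0 T := (hacute (left_mem_Ico.2 hs)).2
  have sub : Icc s T ⊆ Icc 0 T := Icc_subset_Icc_left hs0.1.le
  have β_lt : β s < β T :=
    strictMonoOn_Icc_of_hasDerivAt_pos (fun t ht => h.hasDerivAt_β t (sub ht))
      (fun t ht => by
        have htT := sub (Ioo_subset_Icc_self ht)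
        exact div_pos (cos_pos_of_mem_Ioo ⟨by linarith [(h.χ_mem t htT).1, pi_pos],
          (hacute ⟨ht.1.le, ht.2⟩).1⟩) (h.ρ_pos t htT))
      (left_mem_Icc.2 hs0.2.le) (right_mem_Icc.2 hs0.2.le) hs0.2
  exact (h.β_mem s ⟨hs0.1.le, hs0.2.le⟩).1.not_gt (hβT ▸ β_lt)

theorem eventually_β_neg_of_return (h : PolarArc a μ ρ β χ T) (hμ : 0 < μ) (hT : 0 < T)
    (hβT : β T = 0) : ∀ᶠ s in 𝓝[>] T, β s < 0 := by
  have obtuse := h.pi_div_two_lt_of_return hμ hT hβT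
  have hcos : cos (χ T) < 0 :=
    cos_neg_of_pi_div_two_lt_of_lt obtuse (by linarith [(h.χ_mem T h.right_mem).2, pi_pos])
  simpa only [hβT] using eventually_lt_nhdsGT_of_hasDerivAt_neg (h.hasDerivAt_β T h.right_mem)
    (div_neg_of_neg_of_pos hcos (h.ρ_pos T h.right_mem))

theorem β_pos (h : PolarArc a μ ρ β χ T) (hμ : 0 < μ) (ht : t ∈ Ioo 0 T) : 0 < β t := by
  have htI := Ioo_subset_Icc_self ht
  refine (h.β_mem t htI).1.lt_of_ne' fun hβt => ?_
  obtain ⟨s, hneg, hs⟩ := (((h.restrict htI).eventually_β_neg_of_return hμ ht.1 hβt).and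
    (Ioo_mem_nhdsGT ht.2)).exists
  exact (h.β_mem s ⟨ht.1.le.trans hs.1.le, hs.2.le⟩).1.not_gt hneg

end PolarArc

section SmallRadius

/-- The derivative of the direction `φ` in the generating system written in reversed time and in
the coordinates rotated by `π / 4`, in which the diagonal is `v = 0`, so that
`x = (u + v) / √2`, `y = (u - v) / √2`, `u' = sin φ` and `v' = cos φ`. -/
noncomputable def rotatedTurning (a : ℕ) (μ u v φ : ℝ) : ℝ :=
  2 * a / (u ^ 2 - v ^ 2) * (u * cos φ + v * sin φ) + (v * sin φ - u * cos φ) / 2 + μ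

section Algebra

variable {a : ℕ} {A κ μ u v φ c s g : ℝ}

theorem lt_mul_of_cos_nonneg (hA : 1 ≤ A) (hκμ : 2 * κ < μ) (hu : 0 < u) (hu1 : u ≤ 1)
    (hvs : 0 ≤ v * s) (hg : 0 < g) (hgu : 2 * A ≤ g * u ^ 2) (hc : 0 ≤ c) :
    c + κ * u < u * (g * (u * c + v * s) + (v * s - u * c) / 2 + μ - κ) := by
  have singular : 2 * c ≤ g * u ^ 2 * c := mul_le_mul_of_nonneg_right (by linarith) hc
  have quadratic : u ^ 2 * c ≤ c := mul_le_of_le_one_left hc (pow_le_one₀ hu.le hu1)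
  have forcing : 2 * κ * u < μ * u := mul_lt_mul_of_pos_right hκμ hu
  have : 0 ≤ u * (g * (v * s)) := by positivity
  have : 0 ≤ u * (v * s) := by positivity
  linarith

theorem lt_mul_of_cos_neg (hκμ : 2 * κ < μ + g * (u * c + v * s)) (hu : 0 < u)
    (hvs : 0 ≤ v * s) (hc : c < 0) :
    c + κ * u < u * (g * (u * c + v * s) + (v * s - u * c) / 2 + μ - κ) := by
  have forcing := mul_lt_mul_of_pos_left hκμ hu
  have : 0 ≤ u * (v * s) := by positivity
  have : 0 ≤ u ^ 2 * -c := mul_nonneg (by positivity) (by linarith)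
  linarith

/-- When the singular term is negative, the vector `(c, s)` is nearly vertical and `(u, v)` is far
from the axis `v = u`, so that the singular term is dominated by `μ`. -/
theorem two_mul_lt_of_neg (hA : 1 ≤ A) (hκ : 0 < κ) (hκ4 : κ ≤ 1 / 4) (hκμ : 6 * A * κ ≤ μ)
    (hu : 0 < u) (hu1 : u ≤ 1) (hv : 0 ≤ v) (hs : 0 ≤ s) (hcs : s ^ 2 + c ^ 2 = 1)
    (hg : 0 < g) (hguv : g * (u ^ 2 - v ^ 2) = 2 * A) (hZ : 0 < c + κ * u) (hc : c < 0)
    (hw : u * c + v * s < 0) : 2 * κ < μ + g * (u * c + v * s) := by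
  have hκu : κ * u ≤ 1 / 4 := by nlinarith
  have vertical : 1 / 2 ≤ s := by nlinarith
  have hvs : v * s < κ * u ^ 2 := by nlinarith
  have far_from_axis : v ≤ u / 2 := by nlinarith [mul_le_mul_of_nonneg_left vertical hv]
  have hgu : g * u ^ 2 ≤ 8 / 3 * A := by
    have : 3 / 4 * u ^ 2 ≤ u ^ 2 - v ^ 2 := by nlinarith
    linarith [mul_le_mul_of_nonneg_left this hg.le]
  have hw' : -(κ * u ^ 2) ≤ u * c + v * s := by nlinarith [mul_nonneg hv hs]
  have singular : -(8 / 3 * A * κ) ≤ g * (u * c + v * s) := calc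
    -(8 / 3 * A * κ) ≤ -(g * u ^ 2 * κ) := neg_le_neg (mul_le_mul_of_nonneg_right hgu hκ.le)
    _ = g * -(κ * u ^ 2) := by ring
    _ ≤ g * (u * c + v * s) := mul_le_mul_of_nonneg_left hw' hg.le
  have : κ ≤ A * κ := le_mul_of_one_le_left hκ.le hA
  linarith

theorem sq_sub_sq_pos (hv : 0 ≤ v) (hvu : v < u) : 0 < u ^ 2 - v ^ 2 :=
  sub_pos.2 (pow_lt_pow_left₀ hvu hv two_ne_zero)

theorem two_mul_le_div_mul_sq (a : ℕ) (hv : 0 ≤ v) (hvu : v < u) :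
    2 * a ≤ 2 * a / (u ^ 2 - v ^ 2) * u ^ 2 := by
  rw [div_mul_eq_mul_div, le_div_iff₀ (sq_sub_sq_pos hv hvu)]
  exact mul_le_mul_of_nonneg_left (by linarith [sq_nonneg v]) (by positivity)

theorem lt_mul_rotatedTurning_sub (ha : 1 ≤ a) (hκ : 0 < κ) (hκ4 : κ ≤ 1 / 4)
    (hκμ : 6 * a * κ ≤ μ) (hu1 : u ≤ 1) (hv : 0 ≤ v) (hvu : v < u)
    (hsin : 0 ≤ sin φ) (hZ : 0 < cos φ + κ * u) :
    cos φ + κ * u < u * (rotatedTurning a μ u v φ - κ) := by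
  have hA : (1 : ℝ) ≤ a := by exact_mod_cast ha
  have hu := hv.trans_lt hvu
  have hD := sq_sub_sq_pos hv hvu
  have hg : 0 < 2 * a / (u ^ 2 - v ^ 2) := by positivity
  have hvs := mul_nonneg hv hsin
  have hκμ' : 2 * κ < μ := by linarith [le_mul_of_one_le_left hκ.le hA]
  rcases le_or_gt 0 (cos φ) with hc | hc
  · exact lt_mul_of_cos_nonneg hA hκμ' hu hu1 hvs hg (two_mul_le_div_mul_sq a hv hvu) hc
  refine lt_mul_of_cos_neg ?_ hu hvs hc
  rcases le_or_gt 0 (u * cos φ + v * sin φ) with hw | hw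
  · exact hκμ'.trans_le (le_add_of_nonneg_right (mul_nonneg hg.le hw))
  · exact two_mul_lt_of_neg hA hκ hκ4 hκμ hu hu1 hv hsin (sin_sq_add_cos_sq φ) hg
      (div_mul_cancel₀ _ hD.ne') hZ hc hw

end Algebra

/-- A solution `(u, v, φ)` on `[0, T]` of the generating system in rotated coordinates (see
`rotatedTurning`) that leaves the diagonal `v = 0` perpendicularly and stays between the diagonal
and the axis `v = u`. -/
structure RotatedArc (a : ℕ) (μ : ℝ) (u v φ : ℝ → ℝ) (T : ℝ) : Prop where
  nonneg : 0 ≤ T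
  φ_zero : φ 0 = 0
  v_nonneg : ∀ t ∈ Icc 0 T, 0 ≤ v t
  v_lt_u : ∀ t ∈ Icc 0 T, v t < u t
  φ_le_pi : ∀ t ∈ Icc 0 T, φ t ≤ π
  hasDerivAt_u : ∀ t ∈ Icc 0 T, HasDerivAt u (sin (φ t)) t
  hasDerivAt_v : ∀ t ∈ Icc 0 T, HasDerivAt v (cos (φ t)) t
  hasDerivAt_φ : ∀ t ∈ Icc 0 T, HasDerivAt φ (rotatedTurning a μ (u t) (v t) (φ t)) t

namespace RotatedArc

variable {a : ℕ} {κ μ : ℝ} {u v φ : ℝ → ℝ} {s t T : ℝ}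

theorem u_pos (h : RotatedArc a μ u v φ T) (ht : t ∈ Icc 0 T) : 0 < u t :=
  (h.v_nonneg t ht).trans_lt (h.v_lt_u t ht)

theorem sin_nonneg (h : RotatedArc a μ u v φ T) (ha : 1 ≤ a) (hμ : 0 < μ)
    (hu : ∀ t ∈ Icc 0 T, u t ≤ 1) (ht : t ∈ Icc 0 T) : 0 ≤ sin (φ t) := by
  have φ_pos := pos_of_deriv_pos_of_eq_zero h.hasDerivAt_φ h.φ_zero.ge fun t ht h0 => by
    have hA : (1 : ℝ) ≤ a := by exact_mod_cast ha
    have hut := h.u_pos ht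
    have singular := two_mul_le_div_mul_sq a (h.v_nonneg t ht) (h.v_lt_u t ht)
    have hD := sq_sub_sq_pos (h.v_nonneg t ht) (h.v_lt_u t ht)
    rw [rotatedTurning, h0, cos_zero, sin_zero]
    have : 2 * a / (u t ^ 2 - v t ^ 2) * u t ^ 2 ≤ 2 * a / (u t ^ 2 - v t ^ 2) * u t :=
      mul_le_mul_of_nonneg_left (pow_le_of_le_one hut.le (hu t ht) two_ne_zero) (by positivity)
    linarith [hu t ht]
  rcases ht.1.eq_or_lt with rfl | h0
  · simp [h.φ_zero]
  · exact sin_nonneg_of_nonneg_of_le_pi (φ_pos t ⟨h0, ht.2⟩).le (h.φ_le_pi t ht)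

theorem monotoneOn_u (h : RotatedArc a μ u v φ T) (ha : 1 ≤ a) (hμ : 0 < μ)
    (hu : ∀ t ∈ Icc 0 T, u t ≤ 1) : MonotoneOn u (Icc 0 T) :=
  monotoneOn_Icc_of_hasDerivAt_nonneg h.hasDerivAt_u fun _ ht => h.sin_nonneg ha hμ hu ht

theorem cos_add_mul_mul_le (h : RotatedArc a μ u v φ T) (ha : 1 ≤ a) (hμ : 0 < μ)
    (hu : ∀ t ∈ Icc 0 T, u t ≤ 1) (hκ : 0 < κ) (hκ4 : κ ≤ 1 / 4) (hκμ : 6 * a * κ ≤ μ)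
    (ht : t ∈ Icc 0 T) : (cos (φ t) + κ * u t) * u t ≤ 2 * u 0 := by
  have h0 := left_mem_Icc.2 h.nonneg
  refine le_of_deriv_nonpos_of_le (f := fun t => (cos (φ t) + κ * u t) * u t)
    (fun t ht => (((h.hasDerivAt_φ t ht).cos.add ((h.hasDerivAt_u t ht).const_mul κ)).mul
      (h.hasDerivAt_u t ht))) ?_ (fun t ht hge => ?_) t ht
  · rw [h.φ_zero, cos_zero]
    have : κ * u 0 ≤ 1 := mul_le_one₀ (by linarith) (h.u_pos h0).le (hu 0 h0)
    exact mul_le_mul_of_nonneg_right (by linarith) (h.u_pos h0).le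
  · have hsin := h.sin_nonneg ha hμ hu ht
    have hZ : 0 < cos (φ t) + κ * u t :=
      pos_of_mul_pos_left ((mul_pos two_pos (h.u_pos h0)).trans_le hge) (h.u_pos ht).le
    have := mul_le_mul_of_nonneg_left (lt_mul_rotatedTurning_sub ha hκ hκ4 hκμ (hu t ht)
      (h.v_nonneg t ht) (h.v_lt_u t ht) hsin hZ).le hsin
    simp only [Pi.add_apply]
    linarith

theorem v_add_sq_le (h : RotatedArc a μ u v φ T) (ha : 1 ≤ a) (hμ : 0 < μ)
    (hu : ∀ t ∈ Icc 0 T, u t ≤ 1) (hκ : 0 < κ) (hκ4 : κ ≤ 1 / 4) (hκμ : 6 * a * κ ≤ μ)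
    (hs : s ∈ Icc 0 T) (hus : 4 * u 0 ≤ κ * u s ^ 2) :
    v T + κ / 4 * u T ^ 2 ≤ v s + κ / 4 * u s ^ 2 := by
  have sub : Icc s T ⊆ Icc 0 T := Icc_subset_Icc_left hs.1
  refine antitoneOn_Icc_of_hasDerivAt_nonpos (f := fun t => v t + κ / 4 * u t ^ 2)
    (fun t ht => (h.hasDerivAt_v t (sub ht)).add
      (((h.hasDerivAt_u t (sub ht)).pow 2).const_mul (κ / 4))) (fun t htI => ?_)
    (left_mem_Icc.2 hs.2) (right_mem_Icc.2 hs.2) hs.2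
  have ht := sub htI
  have hut := h.u_pos ht
  have hW := h.cos_add_mul_mul_le ha hμ hu hκ hκ4 hκμ ht
  have hsq : κ * u s ^ 2 ≤ κ * u t ^ 2 := mul_le_mul_of_nonneg_left
    (pow_le_pow_left₀ (h.u_pos hs).le (h.monotoneOn_u ha hμ hu hs ht htI.1) 2) hκ.le
  have hsin : κ / 2 * u t ^ 2 * sin (φ t) ≤ κ / 2 * u t ^ 2 :=
    mul_le_of_le_one_right (by positivity) (sin_le_one _)
  have : (cos (φ t) + κ / 2 * u t * sin (φ t)) * u t ≤ 0 := by linarith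
  have := nonpos_of_mul_nonpos_left this hut
  simp only [Nat.cast_ofNat, Nat.add_one_sub_one, pow_one]
  linarith

theorem u_sq_lt (h : RotatedArc a μ u v φ T) (ha : 1 ≤ a) (hμ : 0 < μ)
    (hu : ∀ t ∈ Icc 0 T, u t ≤ 1) (hκ : 0 < κ) (hκ4 : κ ≤ 1 / 4) (hκμ : 6 * a * κ ≤ μ)
    {u₁ : ℝ} (hu₁ : u₁ ∈ Ioc 0 1) (hu₀ : 4 * u 0 = κ * u₁ ^ 2) :
    κ * u T ^ 2 < 8 * u₁ := by
  have hκu : κ * u₁ ≤ 1 / 4 := mul_le_of_le_one_right hκ.le hu₁.2 |>.trans hκ4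
  have hκu₁ : κ * u₁ ^ 2 ≤ 1 / 4 * u₁ := by
    rw [pow_two, ← mul_assoc]
    exact mul_le_mul_of_nonneg_right hκu hu₁.1.le
  rcases le_or_gt (u T) u₁ with huT | huT
  · have : κ * u T ^ 2 ≤ κ * u₁ ^ 2 := mul_le_mul_of_nonneg_left
      (pow_le_pow_left₀ (h.u_pos (right_mem_Icc.2 h.nonneg)).le huT 2) hκ.le
    linarith [hu₁.1]
  obtain ⟨s, hs, rfl⟩ := intermediate_value_Icc h.nonneg (HasDerivAt.continuousOn h.hasDerivAt_u)
    ⟨by linarith [hu₁.1], huT.le⟩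
  have := h.v_add_sq_le ha hμ hu hκ hκ4 hκμ hs hu₀.le
  linarith [h.v_lt_u s hs, h.v_nonneg T (right_mem_Icc.2 h.nonneg), h.u_pos hs]

end RotatedArc

theorem turning_sub_eq_rotatedTurning {a : ℕ} {μ ρ β χ : ℝ} (hρ : ρ ≠ 0)
    (hcos : cos (2 * β) ≠ 0) : turning a μ ρ β χ - cos χ / ρ =
      rotatedTurning a μ (ρ * cos β) (ρ * sin β) (χ - β) := by
  have hD : (ρ * cos β) ^ 2 - (ρ * sin β) ^ 2 = ρ ^ 2 * cos (2 * β) := by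
    rw [cos_two_mul']
    ring
  have singular : ρ * cos β * cos (χ - β) + ρ * sin β * sin (χ - β) =
      ρ * (cos χ * cos (2 * β) + sin χ * sin (2 * β)) := by
    rw [← cos_sub, show χ - 2 * β = χ - β - β by ring, cos_sub (χ - β) β]
    ring
  have linear : ρ * sin β * sin (χ - β) - ρ * cos β * cos (χ - β) = -(ρ * cos χ) := by
    rw [show cos χ = cos (χ - β + β) by ring_nf, cos_add]
    ring
  rw [rotatedTurning, hD, singular, linear, turning, tan_eq_sin_div_cos]
  field_simp
  ring

namespace PolarArc

variable {a : ℕ} {μ : ℝ} {ρ β χ : ℝ → ℝ} {T : ℝ}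

theorem rotatedArc (h : PolarArc a μ ρ β χ T) :
    RotatedArc a μ (fun t => ρ t * cos (β t)) (fun t => ρ t * sin (β t)) (fun t => χ t - β t) T
    where
  nonneg := h.nonneg
  φ_zero := by simp [h.β_zero, h.χ_zero]
  v_nonneg t ht := mul_nonneg (h.ρ_pos t ht).le (sin_nonneg_of_nonneg_of_le_pi (h.β_mem t ht).1
    (by linarith [(h.β_mem t ht).2, pi_pos]))
  v_lt_u t ht := by
    obtain ⟨hβ, hβ'⟩ := h.β_mem t ht
    refine mul_lt_mul_of_pos_left ?_ (h.ρ_pos t ht)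
    rw [← cos_pi_div_two_sub]
    exact cos_lt_cos_of_nonneg_of_le_pi_div_two hβ (by linarith) (by linarith)
  φ_le_pi t ht := by linarith [(h.χ_mem t ht).2, (h.β_mem t ht).1]
  hasDerivAt_u t ht := ((h.hasDerivAt_ρ t ht).mul (h.hasDerivAt_β t ht).cos).congr_deriv (by
    have := (h.ρ_pos t ht).ne'
    rw [sin_sub]
    field_simp
    ring)
  hasDerivAt_v t ht := ((h.hasDerivAt_ρ t ht).mul (h.hasDerivAt_β t ht).sin).congr_deriv (by
    have := (h.ρ_pos t ht).ne'
    rw [cos_sub]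
    field_simp
    ring)
  hasDerivAt_φ t ht := ((h.hasDerivAt_χ t ht).sub (h.hasDerivAt_β t ht)).congr_deriv
    (turning_sub_eq_rotatedTurning (h.ρ_pos t ht).ne' (h.cos_two_mul_pos ht).ne')

end PolarArc

/-- Arcs starting at radius `l` cannot reach radius `R`: as long as the radius is at most `R`,
it is less than `R`. -/
def Confines (a : ℕ) (μ l R : ℝ) : Prop :=
  ∀ ⦃ρ β χ : ℝ → ℝ⦄ ⦃T : ℝ⦄, PolarArc a μ ρ β χ T → ρ 0 = l → (∀ t ∈ Icc 0 T, ρ t ≤ R) → ρ T < R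

theorem confines_of_le {a : ℕ} {μ κ R : ℝ} (ha : 1 ≤ a) (hμ : 0 < μ) (hκ : 0 < κ)
    (hκ4 : κ ≤ 1 / 4) (hκμ : 6 * a * κ ≤ μ) (hR : R ∈ Ioc 0 1) :
    Confines a μ (κ * (κ * R ^ 2 / 16) ^ 2 / 4) R := fun ρ β χ T h hl hρR => by
  have hT := h.right_mem
  have hu : ∀ t ∈ Icc 0 T, ρ t * cos (β t) ≤ 1 := fun t ht =>
    (mul_le_of_le_one_right (h.ρ_pos t ht).le (cos_le_one _)).trans ((hρR t ht).trans hR.2)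
  have hR0 := hR.1
  have hκR : κ * R ^ 2 ≤ 1 :=
    mul_le_one₀ (by linarith) (by positivity) (pow_le_one₀ hR.1.le hR.2)
  have hu₁ : κ * R ^ 2 / 16 ∈ Ioc 0 1 := ⟨by positivity, by linarith⟩
  have confined := h.rotatedArc.u_sq_lt ha hμ hu hκ hκ4 hκμ hu₁ (by
    rw [hl, h.β_zero, cos_zero]
    ring)
  have hcos : 1 / 2 * ρ T ^ 2 < (ρ T * cos (β T)) ^ 2 := by
    have := mul_pos (pow_pos (h.ρ_pos T hT) 2) (h.cos_two_mul_pos hT)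
    rw [cos_two_mul] at this
    linarith
  have : κ * ρ T ^ 2 < κ * R ^ 2 := by linarith [mul_lt_mul_of_pos_left hcos hκ]
  exact lt_of_pow_lt_pow_left₀ 2 hR.1.le (lt_of_mul_lt_mul_left this hκ.le)

theorem exists_confines {a : ℕ} {μ : ℝ} (ha : 1 ≤ a) (hμ : 0 < μ) :
    ∃ l R : ℝ, 0 < l ∧ l < R ∧ R ^ 2 / 2 + μ * R < 2 * a + 1 ∧ Confines a μ l R := by
  have hA : (1 : ℝ) ≤ a := by exact_mod_cast ha
  obtain ⟨κ, hκ, hκ4, hκμ⟩ : ∃ κ : ℝ, 0 < κ ∧ κ ≤ 1 / 4 ∧ 6 * a * κ ≤ μ :=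
    ⟨min (1 / 4) (μ / (6 * a)), by positivity, min_le_left _ _, by
      rw [← le_div_iff₀' (by positivity)]
      exact min_le_right _ _⟩
  obtain ⟨R, hR, hR1, hμR⟩ : ∃ R : ℝ, 0 < R ∧ R ≤ 1 ∧ μ * R ≤ 1 :=
    ⟨min 1 (1 / μ), by positivity, min_le_left _ _, by
      rw [← le_div_iff₀' hμ]
      exact min_le_right _ _⟩
  have hR2 : R ^ 2 ≤ 1 := pow_le_one₀ hR.le hR1
  refine ⟨κ * (κ * R ^ 2 / 16) ^ 2 / 4, R, by positivity, ?_, by linarith,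
    confines_of_le ha hμ hκ hκ4 hκμ ⟨hR, hR1⟩⟩
  calc κ * (κ * R ^ 2 / 16) ^ 2 / 4 = R * (κ ^ 3 * R ^ 3 / 1024) := by ring
    _ < R * 1 := by
      gcongr
      have : κ ^ 3 ≤ 1 := pow_le_one₀ hκ.le (by linarith)
      have : R ^ 3 ≤ 1 := pow_le_one₀ hR.le hR1
      linarith [mul_le_one₀ ‹κ ^ 3 ≤ 1› (by positivity) ‹R ^ 3 ≤ 1›]
    _ = R := mul_one R

end SmallRadius

section Continuation

variable {X Y : Type*} [TopologicalSpace X] [TopologicalSpace Y] {D : Set Y}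

theorem exists_first_zero {f : ℝ → ℝ} {a b : ℝ} (hab : a ≤ b) (hf : ContinuousOn f (Icc a b))
    (ha : 0 < f a) (hb : f b < 0) : ∃ c ∈ Ioo a b, f c = 0 ∧ ∀ t ∈ Ico a c, 0 < f t := by
  have zero_of_nonpos : ∀ t ∈ Icc a b, f t ≤ 0 → ∃ s ∈ Icc a t, f s = 0 := fun t ht hft =>
    intermediate_value_Icc' ht.1 (hf.mono (Icc_subset_Icc_right ht.2)) ⟨hft, ha.le⟩
  obtain ⟨s, hs, hfs⟩ := zero_of_nonpos b (right_mem_Icc.2 hab) hb.le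
  obtain ⟨c, ⟨hc, hfc⟩, least⟩ := (isCompact_Icc.of_isClosed_subset
    (hf.preimage_isClosed_of_isClosed isClosed_Icc isClosed_singleton)
    inter_subset_left).exists_isLeast ⟨s, hs, hfs⟩
  have hfc : f c = 0 := hfc
  refine ⟨c, ⟨hc.1.lt_of_ne fun h => ?_, hc.2.lt_of_ne fun h => ?_⟩, hfc, fun t ht => ?_⟩
  · exact ha.ne' (h ▸ hfc)
  · exact hb.ne (h ▸ hfc)
  · by_contra! hft
    obtain ⟨s, hs, hfs⟩ := zero_of_nonpos t ⟨ht.1, ht.2.le.trans hc.2⟩ hft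
    exact (least ⟨⟨hs.1, hs.2.trans (ht.2.le.trans hc.2)⟩, hfs⟩).not_gt (hs.2.trans_lt ht.2)

theorem forall_mem_of_forall_mem_interior {g : ℝ → Y} {b : ℝ} (hg : Continuous g)
    (hD : IsClosed D) (h0 : g 0 ∈ D) (start : ∀ᶠ t in 𝓝[>] 0, g t ∈ D)
    (step : ∀ t ∈ Ioo 0 b, (∀ s ∈ Icc 0 t, g s ∈ D) → g t ∈ interior D) :
    ∀ t ∈ Icc 0 b, g t ∈ D := by
  refine IsClosed.Icc_subset_of_forall_mem_nhdsGT_of_Icc_subset (s := g ⁻¹' D)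
    ((hD.preimage hg).inter isClosed_Icc) h0 fun t ht before => ?_
  rcases ht.1.eq_or_lt with rfl | hpos
  · exact start
  · exact nhdsWithin_le_nhds (hg.continuousAt.preimage_mem_nhds
      (mem_interior_iff_mem_nhds.1 (step t ⟨hpos, ht.2⟩ before)))

theorem isClosed_setOf_forall_Icc_mem {F : X → ℝ → Y} (hF : Continuous (uncurry F))
    (hD : IsClosed D) : IsClosed {p : X × ℝ | 0 ≤ p.2 ∧ ∀ t ∈ Icc 0 p.2, F p.1 t ∈ D} := by
  have rescaled : {p : X × ℝ | 0 ≤ p.2 ∧ ∀ t ∈ Icc 0 p.2, F p.1 t ∈ D} =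
      {p : X × ℝ | 0 ≤ p.2} ∩ ⋂ c ∈ Icc (0 : ℝ) 1, {p : X × ℝ | F p.1 (c * p.2) ∈ D} := by
    ext ⟨x, T⟩
    simp only [mem_ofPred_eq, mem_inter_iff, mem_iInter, and_congr_right_iff]
    refine fun hT => ⟨fun h c hc => h _ ⟨mul_nonneg hc.1 hT, mul_le_of_le_one_left hT hc.2⟩,
      fun h t ht => ?_⟩
    rcases hT.eq_or_lt with rfl | hT
    · simpa [le_antisymm ht.2 ht.1] using h 0 (by simp)
    · simpa [hT.ne'] using h (t / T) ⟨div_nonneg ht.1 hT.le, (div_le_one hT).2 ht.2⟩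
  rw [rescaled]
  exact (isClosed_Ici.preimage continuous_snd).inter (isClosed_biInter fun c _ =>
    hD.preimage (hF.comp (by fun_prop : Continuous fun p : X × ℝ => (p.1, c * p.2))))

end Continuation

section Truncation

/-- The coordinatewise projection of a point onto the box `Icc lo hi`, used to extend a vector
field from the box to a bounded Lipschitz field on the whole space. -/
def clampBox (lo hi p : ℝ × ℝ × ℝ) : ℝ × ℝ × ℝ := lo ⊔ (hi ⊓ p)

variable {lo hi p : ℝ × ℝ × ℝ}

theorem clampBox_mem_Icc (h : lo ≤ hi) (p : ℝ × ℝ × ℝ) : clampBox lo hi p ∈ Icc lo hi :=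
  ⟨le_sup_left, sup_le h inf_le_left⟩

theorem clampBox_eq_self (hp : p ∈ Icc lo hi) : clampBox lo hi p = p := by
  rw [clampBox, inf_eq_right.2 hp.2, sup_eq_right.2 hp.1]

theorem lipschitzWith_clampBox (lo hi : ℝ × ℝ × ℝ) : LipschitzWith 1 (clampBox lo hi) := by
  have clamp : ∀ a b : ℝ, LipschitzWith 1 fun x : ℝ => a ⊔ (b ⊓ x) := fun a b =>
    (LipschitzWith.id.const_min b).const_max a
  have fst := (clamp lo.1 hi.1).comp (LipschitzWith.prod_fst (α := ℝ) (β := ℝ × ℝ))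
  have snd := ((clamp lo.2.1 hi.2.1).comp LipschitzWith.prod_fst).comp
    (LipschitzWith.prod_snd (α := ℝ) (β := ℝ × ℝ))
  have thd := ((clamp lo.2.2 hi.2.2).comp LipschitzWith.prod_snd).comp
    (LipschitzWith.prod_snd (α := ℝ) (β := ℝ × ℝ))
  simpa only [mul_one, max_self] using! fst.prodMk (snd.prodMk thd)

theorem exists_lipschitzWith_comp_clampBox {E : Type*} [NormedAddCommGroup E] [NormedSpace ℝ E]
    {f : ℝ × ℝ × ℝ → E} (hf : ContDiffOn ℝ 1 f (Icc lo hi)) (h : lo ≤ hi) :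
    ∃ K C : ℝ≥0, LipschitzWith K (f ∘ clampBox lo hi) ∧ ∀ p, ‖(f ∘ clampBox lo hi) p‖ ≤ C := by
  obtain ⟨K, hK⟩ := hf.exists_lipschitzOnWith one_ne_zero (convex_Icc lo hi) isCompact_Icc
  obtain ⟨C, hC⟩ := isCompact_Icc.exists_bound_of_continuousOn hf.continuousOn
  refine ⟨K * 1, C.toNNReal, ?_, fun p =>
    (hC _ (clampBox_mem_Icc h p)).trans (le_coe_toNNReal C)⟩
  exact lipschitzOnWith_univ.1 (hK.comp (lipschitzWith_clampBox lo hi).lipschitzOnWith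
    fun p _ => clampBox_mem_Icc h p)

end Truncation

/-- The vector field of the generating system in the polar coordinates `(ρ, β, χ)`, see
`turning`. -/
noncomputable def polarField (a : ℕ) (μ : ℝ) (p : ℝ × ℝ × ℝ) : ℝ × ℝ × ℝ :=
  (sin p.2.2, cos p.2.2 / p.1, turning a μ p.1 p.2.1 p.2.2)

theorem contDiffAt_polarField {a : ℕ} {μ : ℝ} {p : ℝ × ℝ × ℝ} (hρ : p.1 ≠ 0)
    (hβ : cos (2 * p.2.1) ≠ 0) : ContDiffAt ℝ 1 (polarField a μ) p := by
  have htan : ContDiffAt ℝ 1 (fun p : ℝ × ℝ × ℝ => tan (2 * p.2.1)) p :=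
    ContDiffAt.comp (g := tan) p (contDiffAt_tan.2 hβ) (by fun_prop)
  unfold polarField turning
  fun_prop (disch := assumption)

section Shooting

/-- The radius at which the two terms of `turning` along the diagonal balance. Arcs that leave the
diagonal at this radius can only return perpendicularly. -/
noncomputable def criticalRadius (a : ℕ) : ℝ := √(4 * a + 2)

/-- A time by which every arc below the critical radius has returned to the diagonal. -/
noncomputable def horizon (μ : ℝ) : ℝ := π / μ + 1

/-- The lower corner of the box on which the generating system is studied. -/
noncomputable def lowerCorner (l B : ℝ) : ℝ × ℝ × ℝ := (l, -B, 0)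

/-- The upper corner of the box on which the generating system is studied: since `ρ' ≤ 1`, no arc
from below the critical radius exceeds the given bound for `ρ` before `horizon μ`. -/
noncomputable def upperCorner (a : ℕ) (μ B : ℝ) : ℝ × ℝ × ℝ := (criticalRadius a + horizon μ, B, π)

/-- The field of the generating system in polar coordinates, extended from the box between
`lowerCorner l B` and `upperCorner a μ B` to a bounded Lipschitz field. -/
noncomputable def clampedField (a : ℕ) (μ l B : ℝ) : ℝ × ℝ × ℝ → ℝ × ℝ × ℝ :=
  polarField a μ ∘ clampBox (lowerCorner l B) (upperCorner a μ B)

/-- The trajectories `t ↦ (ρ r t, β r t, χ r t)` of `clampedField a μ l B` that leave the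
diagonal perpendicularly at radius `r`. The underlying box excludes the angles above `B`, which
arcs returning to the diagonal do not reach because of `barrier_neg`. -/
structure ShootingFlow (a : ℕ) (μ l B : ℝ) (ρ β χ : ℝ → ℝ → ℝ) : Prop where
  μ_pos : 0 < μ
  l_pos : 0 < l
  l_le : l ≤ criticalRadius a
  B_mem : B ∈ Ioo 0 (π / 4)
  barrier_neg : angleBarrier a (μ * l) B < 0
  ρ_zero : ∀ r, ρ r 0 = r
  β_zero : ∀ r, β r 0 = 0
  χ_zero : ∀ r, χ r 0 = 0
  continuous : Continuous (uncurry fun r t => (ρ r t, β r t, χ r t))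
  hasDerivAt : ∀ r t, HasDerivAt (fun t => (ρ r t, β r t, χ r t))
    (clampedField a μ l B (ρ r t, β r t, χ r t)) t

variable {a : ℕ} {μ l B : ℝ}

theorem horizon_pos (hμ : 0 < μ) : 0 < horizon μ := by
  unfold horizon
  positivity

theorem pi_lt_mul_horizon (hμ : 0 < μ) : π < μ * horizon μ := by
  rw [horizon, mul_add, mul_div_cancel₀ _ hμ.ne', mul_one]
  exact lt_add_of_pos_right π hμ

theorem criticalRadius_sq (a : ℕ) : criticalRadius a ^ 2 / 2 = 2 * a + 1 := by
  rw [criticalRadius, sq_sqrt (by positivity)]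
  ring

theorem lowerCorner_le_upperCorner (hμ : 0 < μ) (hl : l ≤ criticalRadius a) (hB : 0 < B) :
    lowerCorner l B ≤ upperCorner a μ B :=
  ⟨hl.trans (le_add_of_nonneg_right (horizon_pos hμ).le), neg_le_self hB.le, pi_pos.le⟩

theorem mem_Icc_corners {p : ℝ × ℝ × ℝ} : p ∈ Icc (lowerCorner l B) (upperCorner a μ B) ↔
    p.1 ∈ Icc l (criticalRadius a + horizon μ) ∧ p.2.1 ∈ Icc (-B) B ∧ p.2.2 ∈ Icc 0 π := by
  simp only [mem_Icc, lowerCorner, upperCorner, Prod.le_def]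
  tauto

theorem contDiffOn_polarField (hl : 0 < l) (hB : B < π / 4) :
    ContDiffOn ℝ 1 (polarField a μ) (Icc (lowerCorner l B) (upperCorner a μ B)) := fun p hp => by
  obtain ⟨hρ, hβ, -⟩ := mem_Icc_corners.1 hp
  exact (contDiffAt_polarField (hl.trans_le hρ.1).ne' (cos_pos_of_mem_Ioo
    ⟨by linarith [hβ.1], by linarith [hβ.2]⟩).ne').contDiffWithinAt

theorem exists_lipschitzWith_clampedField (hμ : 0 < μ) (hl : 0 < l) (hl' : l ≤ criticalRadius a)
    (hB : B ∈ Ioo 0 (π / 4)) : ∃ K C : ℝ≥0,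
      LipschitzWith K (clampedField a μ l B) ∧ ∀ p, ‖clampedField a μ l B p‖ ≤ C :=
  exists_lipschitzWith_comp_clampBox (contDiffOn_polarField hl hB.2)
    (lowerCorner_le_upperCorner hμ hl' hB.1)

theorem clampedField_eq {p : ℝ × ℝ × ℝ} (hp : p ∈ Icc (lowerCorner l B) (upperCorner a μ B)) :
    clampedField a μ l B p = polarField a μ p :=
  congrArg (polarField a μ) (clampBox_eq_self hp)

theorem exists_shootingFlow (hμ : 0 < μ) (hl : 0 < l) (hl' : l ≤ criticalRadius a)
    (hB : B ∈ Ioo 0 (π / 4)) (hbarrier : angleBarrier a (μ * l) B < 0) :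
    ∃ ρ β χ, ShootingFlow a μ l B ρ β χ := by
  obtain ⟨K, C, hK, hC⟩ := exists_lipschitzWith_clampedField hμ hl hl' hB
  obtain ⟨Φ, continuous_Φ, Φ_zero, hasDerivAt_Φ⟩ := exists_continuous_flow hK hC
  refine ⟨fun r t => (Φ (r, 0, 0) t).1, fun r t => (Φ (r, 0, 0) t).2.1,
    fun r t => (Φ (r, 0, 0) t).2.2, hμ, hl, hl', hB, hbarrier, fun r => ?_, fun r => ?_,
    fun r => ?_, ?_, fun r t => hasDerivAt_Φ (r, 0, 0) t⟩
  · rw [Φ_zero]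
  · rw [Φ_zero]
  · rw [Φ_zero]
  · exact continuous_Φ.comp
      (by fun_prop : Continuous fun p : ℝ × ℝ => ((p.1, (0 : ℝ), (0 : ℝ)), p.2))

namespace ShootingFlow

variable {ρ β χ : ℝ → ℝ → ℝ} {r t T : ℝ}

theorem continuous_β (h : ShootingFlow a μ l B ρ β χ) : Continuous (uncurry β) :=
  h.continuous.snd.fst

theorem continuous_χ (h : ShootingFlow a μ l B ρ β χ) : Continuous (uncurry χ) :=
  h.continuous.snd.snd

theorem continuous_field (h : ShootingFlow a μ l B ρ β χ) :
    Continuous fun p : ℝ × ℝ => clampedField a μ l B (ρ p.1 p.2, β p.1 p.2, χ p.1 p.2) :=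
  let ⟨_, _, hK, _⟩ := exists_lipschitzWith_clampedField h.μ_pos h.l_pos h.l_le h.B_mem
  hK.continuous.comp h.continuous

theorem hasDerivAt_ρ (h : ShootingFlow a μ l B ρ β χ) (r t : ℝ) :
    HasDerivAt (ρ r) (clampedField a μ l B (ρ r t, β r t, χ r t)).1 t :=
  (ContinuousLinearMap.fst ℝ ℝ (ℝ × ℝ)).hasFDerivAt.comp_hasDerivAt t (h.hasDerivAt r t)

theorem hasDerivAt_angles (h : ShootingFlow a μ l B ρ β χ) (r t : ℝ) :
    HasDerivAt (fun t => (β r t, χ r t)) (clampedField a μ l B (ρ r t, β r t, χ r t)).2 t :=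
  (ContinuousLinearMap.snd ℝ ℝ (ℝ × ℝ)).hasFDerivAt.comp_hasDerivAt t (h.hasDerivAt r t)

theorem hasDerivAt_β (h : ShootingFlow a μ l B ρ β χ) (r t : ℝ) :
    HasDerivAt (β r) (clampedField a μ l B (ρ r t, β r t, χ r t)).2.1 t :=
  (ContinuousLinearMap.fst ℝ ℝ ℝ).hasFDerivAt.comp_hasDerivAt t (h.hasDerivAt_angles r t)

theorem hasDerivAt_χ (h : ShootingFlow a μ l B ρ β χ) (r t : ℝ) :
    HasDerivAt (χ r) (clampedField a μ l B (ρ r t, β r t, χ r t)).2.2 t :=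
  (ContinuousLinearMap.snd ℝ ℝ ℝ).hasFDerivAt.comp_hasDerivAt t (h.hasDerivAt_angles r t)

theorem field_fst_nonneg (h : ShootingFlow a μ l B ρ β χ) (p : ℝ × ℝ × ℝ) :
    0 ≤ (clampedField a μ l B p).1 :=
  sin_nonneg_of_mem_Icc (mem_Icc_corners.1 (clampBox_mem_Icc
    (lowerCorner_le_upperCorner (a := a) h.μ_pos h.l_le h.B_mem.1) p)).2.2

theorem ρ_mem (h : ShootingFlow a μ l B ρ β χ) (hr : r ∈ Icc l (criticalRadius a))
    (ht : t ∈ Icc 0 (horizon μ)) : ρ r t ∈ Icc l (criticalRadius a + horizon μ) := by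
  have t0 := left_mem_Icc.2 ht.1
  have tt := right_mem_Icc.2 ht.1
  have increasing := monotoneOn_Icc_of_hasDerivAt_nonneg
    (fun s _ => h.hasDerivAt_ρ r s) (fun s _ => h.field_fst_nonneg _) t0 tt ht.1
  have slow := antitoneOn_Icc_of_hasDerivAt_nonpos (f := fun s => ρ r s - s)
    (fun s _ => (h.hasDerivAt_ρ r s).sub (hasDerivAt_id s))
    (fun s _ => sub_nonpos.2 (sin_le_one _)) t0 tt ht.1
  rw [h.ρ_zero] at increasing
  simp only [h.ρ_zero, sub_zero] at slow
  exact ⟨hr.1.trans increasing, by linarith [hr.2, ht.2]⟩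

theorem field_eq (h : ShootingFlow a μ l B ρ β χ) (hr : r ∈ Icc l (criticalRadius a))
    (ht : t ∈ Icc 0 (horizon μ)) (hstrip : (β r t, χ r t) ∈ Icc 0 B ×ˢ Icc 0 π) :
    clampedField a μ l B (ρ r t, β r t, χ r t) = polarField a μ (ρ r t, β r t, χ r t) :=
  clampedField_eq (mem_Icc_corners.2 ⟨h.ρ_mem hr ht,
    Icc_subset_Icc_left (neg_nonpos.2 h.B_mem.1.le) hstrip.1, hstrip.2⟩)

theorem polarArc (h : ShootingFlow a μ l B ρ β χ) (hr : r ∈ Icc l (criticalRadius a))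
    (hT : T ∈ Icc 0 (horizon μ)) (hstrip : ∀ t ∈ Icc 0 T, (β r t, χ r t) ∈ Icc 0 B ×ˢ Icc 0 π) :
    PolarArc a μ (ρ r) (β r) (χ r) T := by
  have sub : Icc 0 T ⊆ Icc 0 (horizon μ) := Icc_subset_Icc_right hT.2
  have field_eq : ∀ t ∈ Icc 0 T, clampedField a μ l B (ρ r t, β r t, χ r t) =
    polarField a μ (ρ r t, β r t, χ r t) := fun t ht => h.field_eq hr (sub ht) (hstrip t ht)
  exact
    { nonneg := hT.1
      β_zero := h.β_zero r
      χ_zero := h.χ_zero r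
      ρ_pos t ht := h.l_pos.trans_le (h.ρ_mem hr (sub ht)).1
      β_mem t ht := ⟨(hstrip t ht).1.1, (hstrip t ht).1.2.trans_lt h.B_mem.2⟩
      χ_mem t ht := (hstrip t ht).2
      hasDerivAt_ρ t ht := (h.hasDerivAt_ρ r t).congr_deriv (congrArg (·.1) (field_eq t ht))
      hasDerivAt_β t ht := (h.hasDerivAt_β r t).congr_deriv (congrArg (·.2.1) (field_eq t ht))
      hasDerivAt_χ t ht := (h.hasDerivAt_χ r t).congr_deriv (congrArg (·.2.2) (field_eq t ht)) }

theorem field_zero_pos (h : ShootingFlow a μ l B ρ β χ) (hr : r ∈ Icc l (criticalRadius a)) :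
    0 < (clampedField a μ l B (ρ r 0, β r 0, χ r 0)).2.1 ∧
      0 < (clampedField a μ l B (ρ r 0, β r 0, χ r 0)).2.2 := by
  have hr0 : 0 < r := h.l_pos.trans_le hr.1
  rw [h.field_eq hr (left_mem_Icc.2 (horizon_pos h.μ_pos).le)
    (by simp [h.β_zero, h.χ_zero, h.B_mem.1.le, pi_pos.le]), h.ρ_zero, h.β_zero, h.χ_zero]
  have subcritical : r ^ 2 / 2 ≤ 2 * a + 1 := by
    rw [← criticalRadius_sq]
    gcongr
    exact hr.2
  have : 0 ≤ (2 * a + 1 - r ^ 2 / 2) / r := div_nonneg (sub_nonneg.2 subcritical) hr0.le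
  simpa [polarField, turning, hr0] using! add_pos_of_nonneg_of_pos this h.μ_pos

theorem eventually_field_pos (h : ShootingFlow a μ l B ρ β χ) :
    ∀ᶠ s in 𝓝 0, ∀ r ∈ Icc l (criticalRadius a),
      (0 < (clampedField a μ l B (ρ r s, β r s, χ r s)).2.1 ∧
        0 < (clampedField a μ l B (ρ r s, β r s, χ r s)).2.2) ∧ β r s < B ∧ χ r s < π := by
  refine isCompact_Icc.eventually_forall_of_forall_eventually fun r hr => ?_
  obtain ⟨hβ, hχ⟩ := h.field_zero_pos hr
  have hβ' : ∀ᶠ p : ℝ × ℝ in 𝓝 (r, 0), _ :=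
    h.continuous_field.snd.fst.continuousAt.eventually (lt_mem_nhds hβ)
  have hχ' : ∀ᶠ p : ℝ × ℝ in 𝓝 (r, 0), _ :=
    h.continuous_field.snd.snd.continuousAt.eventually (lt_mem_nhds hχ)
  have hβB : ∀ᶠ p : ℝ × ℝ in 𝓝 (r, 0), β p.1 p.2 < B :=
    h.continuous_β.continuousAt.eventually (gt_mem_nhds ((h.β_zero r).trans_lt h.B_mem.1))
  have hχπ : ∀ᶠ p : ℝ × ℝ in 𝓝 (r, 0), χ p.1 p.2 < π :=
    h.continuous_χ.continuousAt.eventually (gt_mem_nhds ((h.χ_zero r).trans_lt pi_pos))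
  exact (continuous_swap.tendsto ((0 : ℝ), r)).eventually ((hβ'.and hχ').and (hβB.and hχπ))

theorem exists_start (h : ShootingFlow a μ l B ρ β χ) : ∃ δ > 0, ∀ r ∈ Icc l (criticalRadius a),
    ∀ t ∈ Ioc 0 δ, (β r t, χ r t) ∈ Ioo 0 B ×ˢ Ioo 0 π := by
  obtain ⟨δ, hδ, start⟩ := Metric.nhds_basis_closedBall.eventually_iff.1 h.eventually_field_pos
  refine ⟨δ, hδ, fun r hr t ht => ?_⟩
  have near : ∀ s ∈ Icc 0 t, s ∈ Metric.closedBall 0 δ := fun s hs => by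
    rw [Metric.mem_closedBall, dist_zero_right, norm_of_nonneg hs.1]
    exact hs.2.trans ht.2
  have t0 := left_mem_Icc.2 ht.1.le
  have tt := right_mem_Icc.2 ht.1.le
  have β_increasing := strictMonoOn_Icc_of_hasDerivAt_pos (fun s _ => h.hasDerivAt_β r s)
    (fun s hs => (start (near s (Ioo_subset_Icc_self hs)) r hr).1.1) t0 tt ht.1
  have χ_increasing := strictMonoOn_Icc_of_hasDerivAt_pos (fun s _ => h.hasDerivAt_χ r s)
    (fun s hs => (start (near s (Ioo_subset_Icc_self hs)) r hr).1.2) t0 tt ht.1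
  rw [h.β_zero] at β_increasing
  rw [h.χ_zero] at χ_increasing
  exact ⟨⟨β_increasing, (start (near t tt) r hr).2.1⟩, χ_increasing, (start (near t tt) r hr).2.2⟩

end ShootingFlow

theorem clampedField_of_sin_eq_zero {ρ χ : ℝ} (hρ : ρ ∈ Icc l (criticalRadius a + horizon μ))
    (hχ : χ ∈ Icc 0 π) (hsin : sin χ = 0) (β : ℝ) : clampedField a μ l B (ρ, β, χ) =
      (0, cos χ / ρ, -((ρ ^ 2 / 2 - (2 * a + 1)) * cos χ) / ρ + μ) := by
  simp [clampedField, polarField, turning, clampBox, lowerCorner, upperCorner, hsin,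
    hρ.1, hρ.2, hχ.1, hχ.2]

/-- The curve `(β, χ)` is back on the diagonal at the time `T ≤ H` and remains in the strip
`0 ≤ β ≤ B`, `0 ≤ χ ≤ π` until then. Having such a `T` is a closed condition on the curve. -/
structure ReturnsAt (B H : ℝ) (β χ : ℝ → ℝ) (T : ℝ) : Prop where
  time_mem : T ∈ Ioc 0 H
  β_eq_zero : β T = 0
  mem_strip : ∀ t ∈ Icc 0 T, (β t, χ t) ∈ Icc 0 B ×ˢ Icc 0 π

/-- The curve `(β, χ)` has crossed the diagonal at the time `T ≤ H` and remains in the region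
`β < B`, `0 < χ < π` until then. Having such a `T` is an open condition on the curve. -/
structure CrossesAt (B H : ℝ) (β χ : ℝ → ℝ) (T : ℝ) : Prop where
  time_mem : T ∈ Ioc 0 H
  β_neg : β T < 0
  mem_region : ∀ t ∈ Ioc 0 T, (β t, χ t) ∈ Iio B ×ˢ Ioo 0 π

namespace ShootingFlow

variable {ρ β χ : ℝ → ℝ → ℝ} {r t T : ℝ}

/-- The trajectory would otherwise be a circle centred at the origin, along which `χ` is
constant. -/
theorem sin_χ_ne_zero_of_stationary (h : ShootingFlow a μ l B ρ β χ)
    (hr : r ∈ Icc l (criticalRadius a)) (ht : t ∈ Icc 0 (horizon μ)) (hχ : χ r t ∈ Icc 0 π)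
    (stationary : (clampedField a μ l B (ρ r t, β r t, χ r t)).2.2 = 0) : sin (χ r t) ≠ 0 := by
  intro hsin
  have field_circle : ∀ b, clampedField a μ l B (ρ r t, b, χ r t) =
      (0, cos (χ r t) / ρ r t, 0) := fun b => by
    have field := clampedField_of_sin_eq_zero (B := B) (h.ρ_mem hr ht) hχ hsin
    rw [field] at stationary ⊢
    exact congrArg (fun v => (0, cos (χ r t) / ρ r t, v)) stationary
  let circle := fun s => (ρ r t, β r t + (s - t) * (cos (χ r t) / ρ r t), χ r t)
  have hasDerivAt_circle : ∀ s, HasDerivAt circle (clampedField a μ l B (circle s)) s := fun s => by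
    have linear := ((hasDerivAt_id s).sub_const t).mul_const (cos (χ r t) / ρ r t)
    rw [one_mul] at linear
    rw [field_circle]
    exact (hasDerivAt_const s _).prodMk ((linear.const_add _).prodMk (hasDerivAt_const s _))
  obtain ⟨K, -, hK, -⟩ := exists_lipschitzWith_clampedField h.μ_pos h.l_pos h.l_le h.B_mem
  have eq_circle : (fun s => (ρ r s, β r s, χ r s)) = circle :=
    ODE_solution_unique_univ (v := fun _ => clampedField a μ l B) (s := fun _ => univ) (t₀ := t)
      (fun _ => hK.lipschitzOnWith) (fun s => ⟨h.hasDerivAt r s, trivial⟩)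
      (fun s => ⟨hasDerivAt_circle s, trivial⟩) (by simp [circle])
  obtain ⟨δ, hδ, start⟩ := h.exists_start
  have hχδ : χ r δ = χ r t := congrArg (fun f => (f δ).2.2) eq_circle
  exact (sin_pos_of_mem_Ioo (start r hr δ ⟨hδ, le_rfl⟩).2).ne' (hχδ ▸ hsin)

theorem χ_mem_Ioo (h : ShootingFlow a μ l B ρ β χ) (hr : r ∈ Icc l (criticalRadius a))
    (hT : T ≤ horizon μ) (hχ : ∀ t ∈ Icc 0 T, χ r t ∈ Icc 0 π) (ht : t ∈ Ioo 0 T) :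
    χ r t ∈ Ioo 0 π := by
  have near : ∀ᶠ s in 𝓝 t, χ r s ∈ Icc 0 π := by
    filter_upwards [Icc_mem_nhds ht.1 ht.2] using hχ
  have sin_ne_zero_of_isLocalExtr : IsLocalExtr (χ r) t → sin (χ r t) ≠ 0 := fun hextr =>
    h.sin_χ_ne_zero_of_stationary hr ⟨ht.1.le, ht.2.le.trans hT⟩ near.self_of_nhds
      (hextr.hasDerivAt_eq_zero (h.hasDerivAt_χ r t))
  obtain ⟨h0, hπ⟩ := near.self_of_nhds
  refine ⟨h0.lt_of_ne' fun heq => ?_, hπ.lt_of_ne fun heq => ?_⟩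
  · exact sin_ne_zero_of_isLocalExtr (.inl (near.mono fun s hs => heq.trans_le hs.1))
      (by rw [heq, sin_zero])
  · exact sin_ne_zero_of_isLocalExtr (.inr (near.mono fun s hs => hs.2.trans_eq heq.symm))
      (by rw [heq, sin_pi])

theorem polarArc_of_returnsAt (h : ShootingFlow a μ l B ρ β χ)
    (hr : r ∈ Icc l (criticalRadius a)) (hT : ReturnsAt B (horizon μ) (β r) (χ r) T) :
    PolarArc a μ (ρ r) (β r) (χ r) T :=
  h.polarArc hr (Ioc_subset_Icc_self hT.time_mem) hT.mem_strip

theorem isClosed_setOf_returnsAt (h : ShootingFlow a μ l B ρ β χ) :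
    IsClosed ({r | ∃ T, ReturnsAt B (horizon μ) (β r) (χ r) T} ∩ Icc l (criticalRadius a)) := by
  obtain ⟨δ, hδ, start⟩ := h.exists_start
  have closed : IsClosed {p : ℝ × ℝ | 0 ≤ p.2 ∧
      ∀ t ∈ Icc 0 p.2, (β p.1 t, χ p.1 t) ∈ Icc 0 B ×ˢ Icc 0 π} :=
    isClosed_setOf_forall_Icc_mem (F := fun r t => (β r t, χ r t))
      (h.continuous_β.prodMk h.continuous_χ) (isClosed_Icc.prod isClosed_Icc)
  have compact := ((isCompact_Icc (a := l) (b := criticalRadius a)).prod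
    (isCompact_Icc (a := δ) (b := horizon μ))).inter_right
      (closed.inter (isClosed_eq h.continuous_β (continuous_const (y := 0))))
  convert (compact.image continuous_fst).isClosed using 1
  ext r
  constructor
  · rintro ⟨⟨T, hT⟩, hr⟩
    have late : δ ≤ T := by
      by_contra! hTδ
      exact (start r hr T ⟨hT.time_mem.1, hTδ.le⟩).1.1.ne' hT.β_eq_zero
    exact ⟨(r, T), ⟨⟨hr, late, hT.time_mem.2⟩, ⟨hT.time_mem.1.le, hT.mem_strip⟩, hT.β_eq_zero⟩, rfl⟩
  · rintro ⟨⟨r, T⟩, ⟨⟨hr, hT⟩, ⟨-, strip⟩, hβT⟩, rfl⟩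
    exact ⟨⟨T, ⟨hδ.trans_le hT.1, hT.2⟩, hβT, strip⟩, hr⟩

theorem exists_returnsAt_of_crossesAt (h : ShootingFlow a μ l B ρ β χ)
    (hr : r ∈ Icc l (criticalRadius a)) (hT : CrossesAt B (horizon μ) (β r) (χ r) T) :
    ∃ S, ReturnsAt B (horizon μ) (β r) (χ r) S := by
  obtain ⟨δ, hδ, start⟩ := h.exists_start
  have late : δ ≤ T := by
    by_contra! hTδ
    exact (start r hr T ⟨hT.time_mem.1, hTδ.le⟩).1.1.not_gt hT.β_neg
  obtain ⟨S, hS, hβS, hβpos⟩ := exists_first_zero late (HasDerivAt.continuousOn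
    fun t _ => h.hasDerivAt_β r t) (start r hr δ ⟨hδ, le_rfl⟩).1.1 hT.β_neg
  refine ⟨S, ⟨hδ.trans hS.1, hS.2.le.trans hT.time_mem.2⟩, hβS, fun t ht => ?_⟩
  rcases ht.1.eq_or_lt with rfl | ht0
  · simp [h.β_zero, h.χ_zero, h.B_mem.1.le, pi_pos.le]
  · have region := hT.mem_region t ⟨ht0, ht.2.trans hS.2.le⟩
    have β_nonneg : 0 ≤ β r t := by
      rcases le_total t δ with htδ | htδ
      · exact (start r hr t ⟨ht0, htδ⟩).1.1.le
      · exact ht.2.eq_or_lt.elim (fun htS => (htS ▸ hβS).ge) fun htS => (hβpos t ⟨htδ, htS⟩).le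
    exact ⟨⟨β_nonneg, (mem_Iio.1 region.1).le⟩, Ioo_subset_Icc_self region.2⟩

theorem eventually_crossesAt (h : ShootingFlow a μ l B ρ β χ)
    (hT : CrossesAt B (horizon μ) (β r) (χ r) T) :
    ∀ᶠ s in 𝓝[Icc l (criticalRadius a)] r, CrossesAt B (horizon μ) (β s) (χ s) T := by
  obtain ⟨δ, hδ, start⟩ := h.exists_start
  have hβ : ∀ᶠ s in 𝓝 r, β s T < 0 :=
    (h.continuous_β.uncurry_right T).continuousAt.eventually (gt_mem_nhds hT.β_neg)
  have region : ∀ᶠ s in 𝓝 r, ∀ t ∈ Icc δ T, (β s t, χ s t) ∈ Iio B ×ˢ Ioo 0 π :=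
    isCompact_Icc.eventually_forall_of_forall_eventually fun t ht =>
      (h.continuous_β.prodMk h.continuous_χ).continuousAt.eventually
        ((isOpen_Iio.prod isOpen_Ioo).mem_nhds (hT.mem_region t ⟨hδ.trans_le ht.1, ht.2⟩))
  filter_upwards [nhdsWithin_le_nhds hβ, nhdsWithin_le_nhds region, self_mem_nhdsWithin]
    with s hβs hs hsI
  refine ⟨hT.time_mem, hβs, fun t ht => ?_⟩
  rcases le_total t δ with htδ | htδ
  · have := start s hsI t ⟨ht.1, htδ⟩
    exact ⟨this.1.2, this.2⟩
  · exact hs t ⟨htδ, ht.2⟩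

theorem β_lt_of_angleBarrier_nonneg (h : ShootingFlow a μ l B ρ β χ) (hr : l ≤ r) {b : ℝ}
    (hb : b ∈ Icc 0 (π / 4)) (barrier : 0 ≤ angleBarrier a (μ * r) b) : b < B := by
  by_contra! hBb
  have hB := Ioo_subset_Icc_self h.B_mem
  have hμl : μ * l ≤ μ * r := mul_le_mul_of_nonneg_left hr h.μ_pos.le
  have at_B := antitoneOn_angleBarrier a (mul_pos h.μ_pos (h.l_pos.trans_le hr)).le hB hb hBb
  have at_l := mul_le_mul_of_nonneg_right hμl (cosPowIntegral_nonneg (a := a) hB)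
  have neg := h.barrier_neg
  simp only [angleBarrier] at barrier at_B neg
  linarith

theorem exists_crossesAt (h : ShootingFlow a μ l B ρ β χ) (hr : r ∈ Icc l (criticalRadius a))
    (hT : ReturnsAt B (horizon μ) (β r) (χ r) T) (hχT : χ r T ≠ π) :
    ∃ S, CrossesAt B (horizon μ) (β r) (χ r) S := by
  have arc := h.polarArc_of_returnsAt hr hT
  have hχT : χ r T ∈ Ioo 0 π :=
    ⟨pi_div_two_pos.trans (arc.pi_div_two_lt_of_return h.μ_pos hT.time_mem.1 hT.β_eq_zero),
      (arc.χ_mem T arc.right_mem).2.lt_of_ne hχT⟩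
  have hTH : T < horizon μ := by
    have := arc.mul_time_le
    rw [hT.β_eq_zero, mul_zero, add_zero] at this
    exact lt_of_mul_lt_mul_left ((this.trans hχT.2.le).trans_lt (pi_lt_mul_horizon h.μ_pos))
      h.μ_pos.le
  have region : ∀ t ∈ Ioc 0 T, (β r t, χ r t) ∈ Iio B ×ˢ Ioo 0 π := fun t ht => by
    have htI := Ioc_subset_Icc_self ht
    refine ⟨h.β_lt_of_angleBarrier_nonneg hr.1 (arc.β_mem_Icc htI) ?_, ?_⟩
    · simpa only [h.ρ_zero] using arc.angleBarrier_nonneg_of_return h.μ_pos hT.β_eq_zero htI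
    · rcases ht.2.eq_or_lt with rfl | htT
      · exact hχT
      · exact h.χ_mem_Ioo hr hTH.le arc.χ_mem ⟨ht.1, htT⟩
  have after : ∀ᶠ t in 𝓝 T, (β r t, χ r t) ∈ Iio B ×ˢ Ioo 0 π :=
    (h.hasDerivAt_angles r T).continuousAt.eventually
      ((isOpen_Iio.prod isOpen_Ioo).mem_nhds (region T ⟨hT.time_mem.1, le_rfl⟩))
  obtain ⟨u, hu, after⟩ := mem_nhdsGE_iff_exists_Ico_subset.1 (nhdsWithin_le_nhds after)
  obtain ⟨S, hβS, hS⟩ := ((arc.eventually_β_neg_of_return h.μ_pos hT.time_mem.1 hT.β_eq_zero).and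
    (Ioo_mem_nhdsGT (lt_min (mem_Ioi.1 hu) hTH))).exists
  refine ⟨S, ⟨hT.time_mem.1.trans hS.1, (hS.2.trans_le (min_le_right _ _)).le⟩, hβS, fun t ht => ?_⟩
  rcases le_total t T with htT | htT
  · exact region t ⟨ht.1, htT⟩
  · exact after ⟨htT, ht.2.trans_lt (hS.2.trans_le (min_le_left _ _))⟩

theorem χ_eq_pi_of_returnsAt_criticalRadius (h : ShootingFlow a μ l B ρ β χ)
    (hT : ReturnsAt B (horizon μ) (β (criticalRadius a)) (χ (criticalRadius a)) T) :
    χ (criticalRadius a) T = π := by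
  have arc := h.polarArc_of_returnsAt (right_mem_Icc.2 h.l_le) hT
  have sin_nonpos := arc.sin_nonpos_of_return h.μ_pos hT.β_eq_zero
    (by rw [h.ρ_zero, criticalRadius_sq])
  by_contra hne
  exact sin_nonpos.not_gt (sin_pos_of_mem_Ioo
    ⟨pi_div_two_pos.trans (arc.pi_div_two_lt_of_return h.μ_pos hT.time_mem.1 hT.β_eq_zero),
      (arc.χ_mem T arc.right_mem).2.lt_of_ne hne⟩)

end ShootingFlow

theorem PolarArc.χ_mem_Ioo_of_subcritical {ρ β χ : ℝ → ℝ} {T : ℝ} (h : PolarArc a μ ρ β χ T)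
    (hμ : 0 < μ) (hT : 0 < T) (hρ : ρ T ^ 2 / 2 + μ * ρ T < 2 * a + 1) : χ T ∈ Ioo 0 π := by
  have subcritical : ∀ t ∈ Icc 0 T, ρ t ^ 2 / 2 + μ * ρ t < 2 * a + 1 := fun t ht => by
    have hρt := h.ρ_pos t ht
    have hle := h.monotoneOn_ρ ht h.right_mem ht.2
    exact hρ.trans_le' (by gcongr)
  have χ_pos := pos_of_deriv_pos_of_eq_zero h.hasDerivAt_χ h.χ_zero.ge (fun t ht hχ => by
    have hρt := h.ρ_pos t ht
    have : 0 < (2 * a + 1 - ρ t ^ 2 / 2) / ρ t :=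
      div_pos (by linarith [subcritical t ht, mul_pos hμ hρt]) hρt
    simpa [turning, hχ] using add_pos this hμ) T (right_mem_Ioc.2 hT)
  have χ_lt_pi := pos_of_deriv_pos_of_eq_zero (fun t ht => (h.hasDerivAt_χ t ht).const_sub π)
    (by simpa [h.χ_zero] using pi_pos.le) (fun t ht hχ => by
      have hρt := h.ρ_pos t ht
      have : (ρ t ^ 2 / 2 - (2 * a + 1)) / ρ t < -μ := by
        rw [div_lt_iff₀ hρt]
        linarith [subcritical t ht]
      simpa [turning, ← sub_eq_zero.1 hχ] using by linarith) T (right_mem_Ioc.2 hT)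
  exact ⟨χ_pos, sub_pos.1 χ_lt_pi⟩

namespace ShootingFlow

variable {ρ β χ : ℝ → ℝ → ℝ} {r t T R : ℝ}

theorem mem_region_of_not_returnsAt (h : ShootingFlow a μ l B ρ β χ)
    (hR : R ^ 2 / 2 + μ * R < 2 * a + 1) (hconf : Confines a μ l R)
    (not_returns : ∀ s, ¬ ReturnsAt B (horizon μ) (β l) (χ l) s) (ht : t ∈ Ioc 0 (horizon μ))
    (before : ∀ s ∈ Icc 0 t, (ρ l s, β l s, χ l s) ∈ Iic R ×ˢ Icc 0 B ×ˢ Icc 0 π) :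
    (ρ l t, β l t, χ l t) ∈ Iio R ×ˢ Ioo 0 B ×ˢ Ioo 0 π := by
  have arc := h.polarArc ⟨le_rfl, h.l_le⟩ (Ioc_subset_Icc_self ht) fun s hs => (before s hs).2
  have radius_lt := hconf arc (h.ρ_zero l) fun s hs => (before s hs).1
  have subcritical : ∀ s ∈ Icc 0 t, ρ l s ^ 2 / 2 + μ * ρ l s < 2 * a + 1 := fun s hs => by
    have hρ := arc.ρ_pos s hs
    have hle : ρ l s ≤ R := (before s hs).1
    have hμ := h.μ_pos
    exact hR.trans_le' (by gcongr)
  refine ⟨radius_lt, ⟨(arc.β_mem t arc.right_mem).1.lt_of_ne' fun hβ => ?_, ?_⟩,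
    arc.χ_mem_Ioo_of_subcritical h.μ_pos ht.1 (subcritical t arc.right_mem)⟩
  · exact not_returns t ⟨ht, hβ, fun s hs => (before s hs).2⟩
  · obtain ⟨s, hs, hmax⟩ := isCompact_Icc.exists_isMaxOn ⟨0, arc.left_mem⟩
      (HasDerivAt.continuousOn arc.hasDerivAt_β)
    have barrier := (arc.restrict hs).angleBarrier_nonneg_of_forall_le h.μ_pos
      (fun t ht => hmax (Icc_subset_Icc_right hs.2 ht))
      (by linarith [subcritical s hs, mul_pos h.μ_pos (arc.ρ_pos s hs)])
    rw [h.ρ_zero] at barrier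
    exact (hmax arc.right_mem).trans_lt
      (h.β_lt_of_angleBarrier_nonneg le_rfl (arc.β_mem_Icc hs) barrier)

theorem exists_returnsAt_of_confines (h : ShootingFlow a μ l B ρ β χ) (hlR : l < R)
    (hR : R ^ 2 / 2 + μ * R < 2 * a + 1) (hconf : Confines a μ l R) :
    ∃ T, ReturnsAt B (horizon μ) (β l) (χ l) T := by
  by_contra! not_returns
  have hl : l ∈ Icc l (criticalRadius a) := ⟨le_rfl, h.l_le⟩
  have hH := horizon_pos h.μ_pos
  have initial : (ρ l 0, β l 0, χ l 0) ∈ Iio R ×ˢ Icc 0 B ×ˢ Icc 0 π := by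
    simp [h.ρ_zero, h.β_zero, h.χ_zero, hlR, h.B_mem.1.le, pi_pos.le]
  obtain ⟨δ, hδ, start⟩ := h.exists_start
  have early_radius : ∀ᶠ t in 𝓝[>] 0, ρ l t < R := nhdsWithin_le_nhds
    ((h.hasDerivAt_ρ l 0).continuousAt.eventually (gt_mem_nhds initial.1))
  have strip := forall_mem_of_forall_mem_interior (b := horizon μ)
    (h.continuous.uncurry_left l)
    (isClosed_Iic.prod (isClosed_Icc.prod isClosed_Icc)) ⟨le_of_lt initial.1, initial.2⟩
    (by
      filter_upwards [early_radius, Ioc_mem_nhdsGT hδ] with t hρ ht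
      have := start l hl t ht
      exact ⟨hρ.le, Ioo_subset_Icc_self this.1, Ioo_subset_Icc_self this.2⟩)
    fun t ht before => by
      simpa only [interior_prod_eq, interior_Iic, interior_Icc] using
        h.mem_region_of_not_returnsAt hR hconf not_returns (Ioo_subset_Ioc_self ht) before
  have arc := h.polarArc hl (right_mem_Icc.2 hH.le) fun t ht => (strip t ht).2
  obtain ⟨hρ, hβ, hχ⟩ :=
    h.mem_region_of_not_returnsAt hR hconf not_returns (right_mem_Ioc.2 hH) strip
  have hρpos := arc.ρ_pos _ arc.right_mem
  have drift : (ρ l (horizon μ) ^ 2 / 2 - (2 * a + 1)) * β l (horizon μ) ≤ 0 := by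
    have hsq : ρ l (horizon μ) ^ 2 ≤ R ^ 2 := pow_le_pow_left₀ hρpos.le (le_of_lt hρ) 2
    have hμR : 0 < μ * R := mul_pos h.μ_pos (hρpos.trans hρ)
    exact mul_nonpos_of_nonpos_of_nonneg (by linarith) hβ.1.le
  linarith [arc.mul_time_le, pi_lt_mul_horizon h.μ_pos, hχ.2]

theorem exists_returnsAt_pi (h : ShootingFlow a μ l B ρ β χ)
    (hreturn : ∃ T, ReturnsAt B (horizon μ) (β l) (χ l) T) :
    ∃ r ∈ Icc l (criticalRadius a), ∃ T, ReturnsAt B (horizon μ) (β r) (χ r) T ∧ χ r T = π := by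
  by_contra! oblique
  have all_return : Icc l (criticalRadius a) ⊆
      {r | ∃ T, ReturnsAt B (horizon μ) (β r) (χ r) T} :=
    h.isClosed_setOf_returnsAt.Icc_subset_of_forall_mem_nhdsWithin hreturn fun r hr => by
      obtain ⟨⟨T, hT⟩, hrI⟩ := hr
      have hr := Ico_subset_Icc_self hrI
      obtain ⟨S, hS⟩ := h.exists_crossesAt hr hT (oblique r hr T hT)
      have right : 𝓝[>] r ≤ 𝓝[Icc l (criticalRadius a)] r :=
        nhdsWithin_le_iff.2 (mem_of_superset (Ioo_mem_nhdsGT hrI.2)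
          fun s hs => ⟨hrI.1.trans hs.1.le, hs.2.le⟩)
      filter_upwards [right (h.eventually_crossesAt hS), right self_mem_nhdsWithin] with s hs hsI
      exact h.exists_returnsAt_of_crossesAt hsI hs
  have hc := right_mem_Icc.2 h.l_le
  obtain ⟨T, hT⟩ := all_return hc
  exact oblique _ hc T hT (h.χ_eq_pi_of_returnsAt_criticalRadius hT)

end ShootingFlow

theorem exists_perpendicular_polarArc (ha : 1 ≤ a) (hμ : 0 < μ) :
    ∃ ρ β χ T, 0 < T ∧ PolarArc a μ ρ β χ T ∧ β T = 0 ∧ χ T = π := by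
  obtain ⟨l, R, hl, hlR, hR, hconf⟩ := exists_confines ha hμ
  obtain ⟨B, hB, hbarrier⟩ :=
    exists_angleBarrier_neg (Nat.one_le_iff_ne_zero.1 ha) (mul_pos hμ hl)
  have l_le : l ≤ criticalRadius a := by
    refine le_of_sq_le_sq ?_ (sqrt_nonneg _)
    have := criticalRadius_sq a
    have := pow_lt_pow_left₀ hlR hl.le two_ne_zero
    linarith [mul_pos hμ (hl.trans hlR)]
  obtain ⟨ρ, β, χ, h⟩ := exists_shootingFlow hμ hl l_le hB hbarrier
  obtain ⟨r, hr, T, hT, hχT⟩ :=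
    h.exists_returnsAt_pi (h.exists_returnsAt_of_confines hlR hR hconf)
  exact ⟨ρ r, β r, χ r, T, hT.time_mem.1, h.polarArc_of_returnsAt hr hT, hT.β_eq_zero, hχT⟩

end Shooting

section Coordinates

/-- The coordinate `x` of the point with polar coordinates `(ρ, β)`, the angle `β` being measured
from the diagonal towards the `x`-axis. -/
noncomputable def abscissa (ρ β : ℝ) : ℝ := ρ * cos (π / 4 - β)

/-- The coordinate `y` of the point with polar coordinates `(ρ, β)`, the angle `β` being measured
from the diagonal towards the `x`-axis. -/
noncomputable def ordinate (ρ β : ℝ) : ℝ := ρ * sin (π / 4 - β)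

/-- The direction `θ` of a solution of the generating system whose reversal points in the
direction `χ` at an angle `β` from the diagonal. The last summand is the reversal of time. -/
noncomputable def heading (β χ : ℝ) : ℝ := χ - π / 4 - β - π

theorem abscissa_zero_eq_ordinate_zero (ρ : ℝ) : abscissa ρ 0 = ordinate ρ 0 := by
  simp [abscissa, ordinate]

theorem cos_heading (β χ : ℝ) :
    cos (heading β χ) = -(sin χ * cos (π / 4 - β) + cos χ * sin (π / 4 - β)) := by
  rw [← sin_add, heading, cos_sub_pi, ← cos_sub_pi_div_two]
  ring_nf

theorem sin_heading (β χ : ℝ) :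
    sin (heading β χ) = cos χ * cos (π / 4 - β) - sin χ * sin (π / 4 - β) := by
  rw [← cos_add, heading, sin_sub_pi,
    show χ - π / 4 - β = χ + (π / 4 - β) - π / 2 by ring, sin_sub_pi_div_two, neg_neg]

theorem tan_two_mul_eq (β : ℝ) : tan (2 * β) =
    (cos (π / 4 - β) ^ 2 - sin (π / 4 - β) ^ 2) / (2 * sin (π / 4 - β) * cos (π / 4 - β)) := by
  rw [← cos_two_mul', ← sin_two_mul, show 2 * (π / 4 - β) = π / 2 - 2 * β by ring,
    cos_pi_div_two_sub, sin_pi_div_two_sub, tan_eq_sin_div_cos]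

theorem turning_sub_cos_div {a : ℕ} {μ ρ β χ : ℝ} (hρ : ρ ≠ 0) (hc : cos (π / 4 - β) ≠ 0)
    (hs : sin (π / 4 - β) ≠ 0) : turning a μ ρ β χ - cos χ / ρ =
      -((abscissa ρ β / 2 - a / abscissa ρ β) * sin (heading β χ) +
        (a / ordinate ρ β - ordinate ρ β / 2) * cos (heading β χ) - μ) := by
  have expand : (abscissa ρ β / 2 - a / abscissa ρ β) * sin (heading β χ) +
      (a / ordinate ρ β - ordinate ρ β / 2) * cos (heading β χ) =
      ρ * cos χ / 2 * (sin (π / 4 - β) ^ 2 + cos (π / 4 - β) ^ 2) -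
        2 * a / ρ * (cos χ + sin χ * tan (2 * β)) := by
    rw [tan_two_mul_eq, cos_heading, sin_heading, abscissa, ordinate]
    generalize cos (π / 4 - β) = c at hc ⊢
    generalize sin (π / 4 - β) = s at hs ⊢
    field_simp
    ring
  rw [expand, sin_sq_add_cos_sq, turning]
  field_simp
  ring

namespace PolarArc

variable {a : ℕ} {μ : ℝ} {ρ β χ : ℝ → ℝ} {t T : ℝ}

theorem cos_pi_div_four_sub_pos (h : PolarArc a μ ρ β χ T) (ht : t ∈ Icc 0 T) :
    0 < cos (π / 4 - β t) :=
  cos_pos_of_mem_Ioo ⟨by linarith [(h.β_mem t ht).2, pi_pos],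
    by linarith [(h.β_mem t ht).1, pi_pos]⟩

theorem sin_pi_div_four_sub_pos (h : PolarArc a μ ρ β χ T) (ht : t ∈ Icc 0 T) :
    0 < sin (π / 4 - β t) :=
  sin_pos_of_mem_Ioo ⟨by linarith [(h.β_mem t ht).2], by linarith [(h.β_mem t ht).1, pi_pos]⟩

theorem abscissa_pos (h : PolarArc a μ ρ β χ T) (ht : t ∈ Icc 0 T) :
    0 < abscissa (ρ t) (β t) :=
  mul_pos (h.ρ_pos t ht) (h.cos_pi_div_four_sub_pos ht)

theorem ordinate_pos (h : PolarArc a μ ρ β χ T) (ht : t ∈ Icc 0 T) :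
    0 < ordinate (ρ t) (β t) :=
  mul_pos (h.ρ_pos t ht) (h.sin_pi_div_four_sub_pos ht)

theorem ordinate_lt_abscissa (h : PolarArc a μ ρ β χ T) (hμ : 0 < μ) (ht : t ∈ Ioo 0 T) :
    ordinate (ρ t) (β t) < abscissa (ρ t) (β t) := by
  have htI := Ioo_subset_Icc_self ht
  have hβ := h.β_pos hμ ht
  have hβ' := (h.β_mem t htI).2
  refine mul_lt_mul_of_pos_left ?_ (h.ρ_pos t htI)
  rw [← cos_pi_div_two_sub]
  exact cos_lt_cos_of_nonneg_of_le_pi (by linarith) (by linarith [pi_pos]) (by linarith)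

theorem hasDerivAt_abscissa (h : PolarArc a μ ρ β χ T) (ht : t ∈ Icc 0 T) :
    HasDerivAt (fun t => abscissa (ρ t) (β t)) (-cos (heading (β t) (χ t))) t := by
  refine ((h.hasDerivAt_ρ t ht).mul
    ((h.hasDerivAt_β t ht).const_sub (π / 4)).cos).congr_deriv ?_
  rw [cos_heading]
  field_simp [(h.ρ_pos t ht).ne']

theorem hasDerivAt_ordinate (h : PolarArc a μ ρ β χ T) (ht : t ∈ Icc 0 T) :
    HasDerivAt (fun t => ordinate (ρ t) (β t)) (-sin (heading (β t) (χ t))) t := by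
  refine ((h.hasDerivAt_ρ t ht).mul
    ((h.hasDerivAt_β t ht).const_sub (π / 4)).sin).congr_deriv ?_
  rw [sin_heading]
  field_simp [(h.ρ_pos t ht).ne']
  ring

theorem hasDerivAt_heading (h : PolarArc a μ ρ β χ T) (ht : t ∈ Icc 0 T) :
    HasDerivAt (fun t => heading (β t) (χ t))
      (-((abscissa (ρ t) (β t) / 2 - a / abscissa (ρ t) (β t)) * sin (heading (β t) (χ t)) +
        (a / ordinate (ρ t) (β t) - ordinate (ρ t) (β t) / 2) * cos (heading (β t) (χ t)) - μ))
      t :=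
  ((((h.hasDerivAt_χ t ht).sub_const (π / 4)).sub (h.hasDerivAt_β t ht)).sub_const π).congr_deriv
    (turning_sub_cos_div (h.ρ_pos t ht).ne' (h.cos_pi_div_four_sub_pos ht).ne'
      (h.sin_pi_div_four_sub_pos ht).ne')

end PolarArc

end Coordinates

end LambdaArc

/-- There is a solution of the generating system with `m = n` that starts on the diagonal
`y = x`, leaves it perpendicularly (θ = −π/4), stays strictly below the diagonal, and
returns to the diagonal perpendicularly (θ = −5π/4). -/
theorem exists_perpendicular_arc_below_diagonal
    (lam : ℝ) (hlam : lam < 0) (n : ℕ) (hn : 2 ≤ n) :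
    ∃ (T : ℝ) (x y θ : ℝ → ℝ), 0 < T ∧
      (∀ t ∈ Set.Icc 0 T, 0 < x t ∧ 0 < y t) ∧
      (∀ t ∈ Set.Icc 0 T, HasDerivAt x (Real.cos (θ t)) t) ∧
      (∀ t ∈ Set.Icc 0 T, HasDerivAt y (Real.sin (θ t)) t) ∧
      (∀ t ∈ Set.Icc 0 T, HasDerivAt θ
        ((x t / 2 - ((n : ℝ) - 1) / x t) * Real.sin (θ t) +
          (((n : ℝ) - 1) / y t - y t / 2) * Real.cos (θ t) + lam) t) ∧
      x 0 = y 0 ∧ 0 < x 0 ∧ θ 0 = -(π / 4) ∧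
      x T = y T ∧ 0 < x T ∧ θ T = -(5 * π / 4) ∧
      (∀ t ∈ Set.Ioo 0 T, 0 < y t ∧ y t < x t) := by
  obtain ⟨a, rfl⟩ : ∃ a, n = a + 1 := ⟨n - 1, by lia⟩
  obtain ⟨ρ, β, χ, T, hT, arc, hβT, hχT⟩ :=
    LambdaArc.exists_perpendicular_polarArc (by lia : 1 ≤ a) (neg_pos.2 hlam)
  have reversed : ∀ {t}, t ∈ Set.Icc 0 T → T - t ∈ Set.Icc 0 T := fun ht =>
    ⟨sub_nonneg.2 ht.2, sub_le_self T ht.1⟩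
  refine ⟨T, fun t => LambdaArc.abscissa (ρ (T - t)) (β (T - t)),
    fun t => LambdaArc.ordinate (ρ (T - t)) (β (T - t)),
    fun t => LambdaArc.heading (β (T - t)) (χ (T - t)), hT,
    fun t ht => ⟨arc.abscissa_pos (reversed ht), arc.ordinate_pos (reversed ht)⟩,
    fun t ht => ?_, fun t ht => ?_, fun t ht => ?_, ?_, arc.abscissa_pos (reversed arc.left_mem),
    ?_, ?_, arc.abscissa_pos (reversed arc.right_mem), ?_, fun t ht => ⟨?_, ?_⟩⟩
  · simpa using (arc.hasDerivAt_abscissa (reversed ht)).comp_const_sub T t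
  · simpa using (arc.hasDerivAt_ordinate (reversed ht)).comp_const_sub T t
  · simpa using (arc.hasDerivAt_heading (reversed ht)).comp_const_sub T t
  · simpa [hβT] using LambdaArc.abscissa_zero_eq_ordinate_zero (ρ T)
  · simp [hβT, hχT, LambdaArc.heading]
  · simpa [arc.β_zero] using LambdaArc.abscissa_zero_eq_ordinate_zero (ρ 0)
  · simp only [sub_self, arc.β_zero, arc.χ_zero, LambdaArc.heading]
    ring
  · exact arc.ordinate_pos (reversed (Set.Ioo_subset_Icc_self ht))
  · exact arc.ordinate_lt_abscissa (neg_pos.2 hlam) ⟨sub_pos.2 ht.2, sub_lt_self T ht.1⟩
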